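/- arXiv:2208.07326 — 4 statements merged into one kernel-verified Lean document; each statement's English description precedes it below -/
import Mathlib

section
/- Let ρ∞ > 0, θ∞ > 0, r > 0, σ > 0 and u∞ < 0 with |u∞| > r + 2σ. Then there exist constants δ₀ > 0 and C > 0 such that: whenever 0 < Φ_b ≤ δ₀ and Φ^s : [0,∞) → ℝ satisfies 0 ≤ Φ^s(x) ≤ Φ_b for all x ≥ 0, the function ξ ↦ ∂_{ξ₁}F^s(x,ξ)/M∞(ξ)^{1/2} is differentiable in ξ = (ξ₁,ξ₂,ξ₃) for each x ≥ 0, and sup_{x ≥ 0} ( ∫_{ℝ³} |∇_ξ ( ∂_{ξ₁}F^s(x,ξ)/M∞(ξ)^{1/2} )|² dξ )^{1/2} ≤ C, where C and δ₀ are independent of Φ^s and Φ_b. -/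
open MeasureTheory Real Set Filter

/-- The Maxwellian `M∞` with parameters `ρ∞, θ∞, u∞`, where `ξ = (ξ₁, ξ₂, ξ₃)`. -/
noncomputable def Maxwellian (ρ θ u : ℝ) (ξ : ℝ × ℝ × ℝ) : ℝ :=
  ρ * (2 * π * θ) ^ (-(3:ℝ)/2) *
    Real.exp (-(((ξ.1 - u)^2 + ξ.2.1^2 + ξ.2.2^2) / (2 * θ)))

/-- The stationary profile `F^s(x,ξ) = (M∞ψ)(−√(ξ₁²−2Φ^s(x)), ξ')` for `ξ₁ < 0`,
`ξ₁² > 2Φ^s(x)`, and `0` otherwise; `ψ` is a function of `ξ₁` only. -/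
noncomputable def statF (ρ θ u : ℝ) (ψ : ℝ → ℝ) (Φs : ℝ → ℝ) (x : ℝ) (ξ : ℝ × ℝ × ℝ) : ℝ :=
  if ξ.1 < 0 ∧ 2 * Φs x < ξ.1^2 then
    Maxwellian ρ θ u (-Real.sqrt (ξ.1^2 - 2 * Φs x), ξ.2) *
      ψ (-Real.sqrt (ξ.1^2 - 2 * Φs x))
  else 0

/-!
Along a characteristic `ξ₁² - 2Φ^s` is conserved, so `F^s(x, ·)` is the incoming Gaussian times
cutoff evaluated at `w = -√(ξ₁² - 2Φ^s(x))` in place of `ξ₁`. The cutoff keeps `|w| ≥ r`, hence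
`F^s` is as smooth as `ψ` and the first two derivatives of `w` in `ξ₁` are bounded. Moreover
`|ξ₁ - w| ≤ √(2Φ^s)` is bounded, and a bounded shift costs an arbitrarily small part of the
exponent of a Gaussian, as does a polynomial factor, whereas the division by `M∞^{1/2}` costs only
half of it. So the quotient and its gradient are dominated by a Gaussian that depends on `Φ^s` only
through an upper bound for it.
-/

open scoped Polynomial

/-- The functions `f` with `|f| ≤ b` and `‖∇f‖ ≤ b` pointwise: a pointwise `C¹` bound, stable under
sums, products and non-expansive changes of variables. -/
structure C1MajorizedBy {E : Type*} [NormedAddCommGroup E] [NormedSpace ℝ E]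
    (f b : E → ℝ) : Prop where
  differentiable : Differentiable ℝ f
  abs_le : ∀ x, |f x| ≤ b x
  norm_fderiv_le : ∀ x, ‖fderiv ℝ f x‖ ≤ b x

namespace C1MajorizedBy

variable {E F : Type*} [NormedAddCommGroup E] [NormedSpace ℝ E]
  [NormedAddCommGroup F] [NormedSpace ℝ F] {f g b d : E → ℝ}

lemma of_deriv {f b : ℝ → ℝ} (hf : Differentiable ℝ f) (hb : ∀ x, |f x| ≤ b x)
    (hb' : ∀ x, |deriv f x| ≤ b x) : C1MajorizedBy f b where
  differentiable := hf
  abs_le := hb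
  norm_fderiv_le x := norm_deriv_eq_norm_fderiv (f := f) (x := x) ▸ hb' x

lemma abs_deriv_le {f b : ℝ → ℝ} (hf : C1MajorizedBy f b) (x : ℝ) : |deriv f x| ≤ b x :=
  (norm_deriv_eq_norm_fderiv (f := f) (x := x)).trans_le (hf.norm_fderiv_le x)

lemma nonneg (hf : C1MajorizedBy f b) (x : E) : 0 ≤ b x :=
  (abs_nonneg _).trans (hf.abs_le x)

lemma mono (hf : C1MajorizedBy f b) (hbd : ∀ x, b x ≤ d x) : C1MajorizedBy f d where
  differentiable := hf.differentiable
  abs_le x := (hf.abs_le x).trans (hbd x)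
  norm_fderiv_le x := (hf.norm_fderiv_le x).trans (hbd x)

lemma add (hf : C1MajorizedBy f b) (hg : C1MajorizedBy g d) :
    C1MajorizedBy (fun x => f x + g x) (fun x => b x + d x) where
  differentiable := hf.differentiable.add hg.differentiable
  abs_le x := (abs_add_le _ _).trans (add_le_add (hf.abs_le x) (hg.abs_le x))
  norm_fderiv_le x := by
    rw [fderiv_fun_add (hf.differentiable x) (hg.differentiable x)]
    exact (norm_add_le _ _).trans (add_le_add (hf.norm_fderiv_le x) (hg.norm_fderiv_le x))

lemma const_mul (hf : C1MajorizedBy f b) (k : ℝ) :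
    C1MajorizedBy (fun x => k * f x) (fun x => |k| * b x) where
  differentiable := hf.differentiable.const_mul k
  abs_le x := by
    rw [abs_mul]
    exact mul_le_mul_of_nonneg_left (hf.abs_le x) (abs_nonneg k)
  norm_fderiv_le x := by
    rw [fderiv_const_mul (hf.differentiable x), norm_smul, Real.norm_eq_abs]
    exact mul_le_mul_of_nonneg_left (hf.norm_fderiv_le x) (abs_nonneg k)

lemma mul (hf : C1MajorizedBy f b) (hg : C1MajorizedBy g d) :
    C1MajorizedBy (fun x => f x * g x) (fun x => 2 * (b x * d x)) where
  differentiable := hf.differentiable.mul hg.differentiable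
  abs_le x := by
    have hfg : |f x * g x| ≤ b x * d x := by
      rw [abs_mul]
      exact mul_le_mul (hf.abs_le x) (hg.abs_le x) (abs_nonneg _) (hf.nonneg x)
    linarith [mul_nonneg (hf.nonneg x) (hg.nonneg x)]
  norm_fderiv_le x := by
    rw [fderiv_fun_mul (hf.differentiable x) (hg.differentiable x)]
    calc ‖f x • fderiv ℝ g x + g x • fderiv ℝ f x‖
        ≤ |f x| * ‖fderiv ℝ g x‖ + |g x| * ‖fderiv ℝ f x‖ := by
          refine (norm_add_le _ _).trans_eq ?_
          rw [norm_smul, norm_smul, Real.norm_eq_abs, Real.norm_eq_abs]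
      _ ≤ b x * d x + d x * b x := by
          have := hf.nonneg x
          have := hg.nonneg x
          gcongr
          exacts [hf.abs_le x, hg.norm_fderiv_le x, hg.abs_le x, hf.norm_fderiv_le x]
      _ = 2 * (b x * d x) := by ring

lemma comp (hf : C1MajorizedBy f b) {φ : F → E} (hφ : Differentiable ℝ φ)
    (hφ' : ∀ y, ‖fderiv ℝ φ y‖ ≤ 1) :
    C1MajorizedBy (fun y => f (φ y)) (fun y => b (φ y)) where
  differentiable := hf.differentiable.comp hφ
  abs_le y := hf.abs_le (φ y)
  norm_fderiv_le y := by
    rw [fderiv_fun_comp y (hf.differentiable _) (hφ y)]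
    calc _ ≤ ‖fderiv ℝ f (φ y)‖ * ‖fderiv ℝ φ y‖ := ContinuousLinearMap.opNorm_comp_le _ _
      _ ≤ b (φ y) * 1 := mul_le_mul (hf.norm_fderiv_le _) (hφ' y) (norm_nonneg _) (hf.nonneg _)
      _ = b (φ y) := mul_one _

lemma comp_sub_const (hf : C1MajorizedBy f b) (a : E) :
    C1MajorizedBy (fun x => f (x - a)) (fun x => b (x - a)) :=
  hf.comp (differentiable_id.sub_const a) fun x => by
    rw [fderiv_sub_const, fderiv_fun_id]
    exact ContinuousLinearMap.norm_id_le

lemma mul_prod (hf : C1MajorizedBy f b) {h e : F → ℝ} (hh : C1MajorizedBy h e) :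
    C1MajorizedBy (fun p : E × F => f p.1 * h p.2) (fun p => 2 * (b p.1 * e p.2)) :=
  (hf.comp differentiable_fst fun p => by
    rw [fderiv_fst]
    exact ContinuousLinearMap.norm_fst_le ℝ E F).mul <|
  hh.comp differentiable_snd fun p => by
    rw [fderiv_snd]
    exact ContinuousLinearMap.norm_snd_le ℝ E F

section Integral

variable [MeasurableSpace E] [OpensMeasurableSpace E] {μ : Measure E}

lemma integrable_norm_fderiv_sq (hf : C1MajorizedBy f b) (hb : Integrable (fun x => b x ^ 2) μ) :
    Integrable (fun x => ‖fderiv ℝ f x‖ ^ 2) μ := by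
  refine hb.mono' ((measurable_fderiv ℝ f).norm.pow_const 2).aestronglyMeasurable
    (Eventually.of_forall fun x => ?_)
  rw [Real.norm_of_nonneg (by positivity)]
  exact pow_le_pow_left₀ (norm_nonneg _) (hf.norm_fderiv_le x) 2

lemma integral_norm_fderiv_sq_le (hf : C1MajorizedBy f b)
    (hb : Integrable (fun x => b x ^ 2) μ) :
    ∫ x, ‖fderiv ℝ f x‖ ^ 2 ∂μ ≤ ∫ x, b x ^ 2 ∂μ :=
  integral_mono (hf.integrable_norm_fderiv_sq hb) hb fun x =>
    pow_le_pow_left₀ (norm_nonneg _) (hf.norm_fderiv_le x) 2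

end Integral

end C1MajorizedBy

/-- The unnormalised centred Gaussian `y ↦ exp (-a y²)`, which appears both as a factor of the
Maxwellian and as a decay rate; `a` may be negative, so that inverses are of the same form. -/
noncomputable def gauss (a y : ℝ) : ℝ := Real.exp (-a * y ^ 2)

section Gauss

variable {a b : ℝ}

lemma gauss_pos (a y : ℝ) : 0 < gauss a y := Real.exp_pos _

lemma gauss_add (a b y : ℝ) : gauss (a + b) y = gauss a y * gauss b y := by
  rw [gauss, gauss, gauss, ← Real.exp_add]
  ring_nf

lemma gauss_neg (a y : ℝ) : gauss (-a) y = (gauss a y)⁻¹ := by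
  rw [gauss, gauss, ← Real.exp_neg]
  ring_nf

lemma gauss_half_sq (a y : ℝ) : gauss (a / 2) y ^ 2 = gauss a y := by
  rw [sq, ← gauss_add, add_halves]

lemma sqrt_gauss (a y : ℝ) : √(gauss a y) = gauss (a / 2) y := by
  rw [← gauss_half_sq, Real.sqrt_sq (gauss_pos _ _).le]

lemma integrable_gauss_sq (ha : 0 < a) : Integrable fun y => gauss a y ^ 2 := by
  have h : Integrable (gauss (a + a)) := integrable_exp_neg_mul_sq (by positivity)
  simpa only [sq (gauss _ _), ← gauss_add] using h

lemma hasDerivAt_gauss (a y : ℝ) : HasDerivAt (gauss a) (-(2 * a * y) * gauss a y) y := by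
  refine ((hasDerivAt_pow 2 y).const_mul (-a)).exp.congr_deriv ?_
  rw [gauss]
  push_cast
  ring

lemma contDiff_gauss (a : ℝ) {n : WithTop ℕ∞} : ContDiff ℝ n (gauss a) := by
  unfold gauss
  fun_prop

lemma exists_abs_pow_mul_gauss_le (n : ℕ) (hab : b < a) :
    ∃ B, ∀ y, |y| ^ n * gauss a y ≤ B * gauss b y := by
  set k := a - b with hk
  have : 0 < k := sub_pos.2 hab
  refine ⟨1 + n.factorial / k ^ n, fun y => ?_⟩
  have h_even : (y ^ 2) ^ n ≤ n.factorial / k ^ n * Real.exp (k * y ^ 2) := by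
    have h := Real.pow_div_factorial_le_exp (k * y ^ 2) (by positivity) n
    rw [mul_pow, div_le_iff₀ (by positivity)] at h
    rw [div_mul_eq_mul_div, le_div_iff₀ (by positivity)]
    linarith
  have h_pow : |y| ^ n ≤ 1 + (y ^ 2) ^ n := by
    rw [← sq_abs, ← pow_mul, mul_comm, pow_mul]
    nlinarith [sq_nonneg (|y| ^ n - 1)]
  have h_exp : 1 ≤ Real.exp (k * y ^ 2) := Real.one_le_exp (by positivity)
  calc |y| ^ n * gauss a y
      ≤ (1 + n.factorial / k ^ n) * Real.exp (k * y ^ 2) * gauss a y :=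
        mul_le_mul_of_nonneg_right (by linarith) (gauss_pos _ _).le
    _ = (1 + n.factorial / k ^ n) * gauss b y := by
        rw [mul_assoc, gauss, gauss, ← Real.exp_add, hk]
        ring_nf

lemma exists_abs_eval_mul_gauss_le (p : ℝ[X]) (hab : b < a) :
    ∃ B, ∀ y, |p.eval y * gauss a y| ≤ B * gauss b y := by
  induction p using Polynomial.induction_on' with
  | add p q hp hq =>
    obtain ⟨B, hB⟩ := hp
    obtain ⟨D, hD⟩ := hq
    refine ⟨B + D, fun y => ?_⟩
    rw [Polynomial.eval_add, add_mul, add_mul]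
    exact (abs_add_le _ _).trans (add_le_add (hB y) (hD y))
  | monomial n k =>
    obtain ⟨B, hB⟩ := exists_abs_pow_mul_gauss_le n hab
    refine ⟨|k| * B, fun y => ?_⟩
    rw [Polynomial.eval_monomial, abs_mul, abs_mul, abs_pow, abs_of_pos (gauss_pos _ _), mul_assoc,
      mul_assoc]
    exact mul_le_mul_of_nonneg_left (hB y) (abs_nonneg k)

lemma deriv_eval_mul_gauss (p : ℝ[X]) (a y : ℝ) :
    deriv (fun y => p.eval y * gauss a y) y =
      (Polynomial.derivative p - Polynomial.C (2 * a) * Polynomial.X * p).eval y * gauss a y := by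
  rw [((p.hasDerivAt y).fun_mul (hasDerivAt_gauss a y)).deriv]
  simp only [Polynomial.eval_sub, Polynomial.eval_mul, Polynomial.eval_C, Polynomial.eval_X]
  ring

lemma exists_c1MajorizedBy_eval_mul_gauss (p : ℝ[X]) (hab : b < a) :
    ∃ B, C1MajorizedBy (fun y => p.eval y * gauss a y) (fun y => B * gauss b y) := by
  obtain ⟨B, hB⟩ := exists_abs_eval_mul_gauss_le p hab
  obtain ⟨D, hD⟩ := exists_abs_eval_mul_gauss_le
    (Polynomial.derivative p - Polynomial.C (2 * a) * Polynomial.X * p) hab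
  refine ⟨max B D, .of_deriv (p.differentiable.mul ((contDiff_gauss a).differentiable one_ne_zero))
    (fun y => (hB y).trans ?_) fun y => ?_⟩
  · exact mul_le_mul_of_nonneg_right (le_max_left _ _) (gauss_pos _ _).le
  · rw [deriv_eval_mul_gauss]
    exact (hD y).trans (mul_le_mul_of_nonneg_right (le_max_right _ _) (gauss_pos _ _).le)

lemma exists_c1MajorizedBy_gauss (hab : b < a) :
    ∃ B, C1MajorizedBy (gauss a) (fun y => B * gauss b y) := by
  simpa only [Polynomial.eval_one, one_mul] using exists_c1MajorizedBy_eval_mul_gauss 1 hab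

lemma exists_forall_c1MajorizedBy_mul_gauss {k : ℝ} (hb : b < a + k) (u B : ℝ) :
    ∃ D, ∀ f : ℝ → ℝ, C1MajorizedBy f (fun s => B * gauss a (s - u)) →
      C1MajorizedBy (fun s => f s * gauss k (s - u)) (fun s => D * gauss b (s - u)) := by
  obtain ⟨A, hA⟩ := exists_c1MajorizedBy_gauss (sub_lt_iff_lt_add'.2 hb)
  refine ⟨2 * B * A, fun f hf => (hf.mul (hA.comp_sub_const u)).mono fun s => le_of_eq ?_⟩
  rw [← add_sub_cancel a b, gauss_add, add_sub_cancel]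
  ring

lemma exists_c1MajorizedBy_deriv_gauss (hab : b < a) :
    ∃ B, C1MajorizedBy (deriv (gauss a)) (fun y => B * gauss b y) := by
  have h_deriv : deriv (gauss a) =
      fun y => (-(Polynomial.C (2 * a) * Polynomial.X) : ℝ[X]).eval y * gauss a y := by
    ext y
    simp [(hasDerivAt_gauss a y).deriv]
  rw [h_deriv]
  exact exists_c1MajorizedBy_eval_mul_gauss _ hab

lemma gauss_le_exp_mul_gauss {x y δ : ℝ} (hb : 0 ≤ b) (hab : b < a) (hxy : |y - x| ≤ δ) :
    gauss a x ≤ Real.exp (a * b / (a - b) * δ ^ 2) * gauss b y := by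
  have hk : 0 < a - b := sub_pos.2 hab
  have h_square : a * x ^ 2 - b * y ^ 2 + a * b / (a - b) * (y - x) ^ 2 =
      (a * x - b * y) ^ 2 / (a - b) := by
    field_simp
    ring
  have h_delta : a * b / (a - b) * (y - x) ^ 2 ≤ a * b / (a - b) * δ ^ 2 :=
    mul_le_mul_of_nonneg_left (sq_le_sq.2 (hxy.trans (le_abs_self δ)))
      (div_nonneg (mul_nonneg (hb.trans hab.le) hb) hk.le)
  have h_nonneg : 0 ≤ (a * x - b * y) ^ 2 / (a - b) := by positivity
  rw [gauss, gauss, ← Real.exp_add, Real.exp_le_exp]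
  linarith

end Gauss

/-- The data `g`, prescribed for incoming velocities, transported along the characteristics on which
`s ^ 2 - c` is conserved, with `c` twice the potential: a particle with velocity `s` has entered
with velocity `-√(s ^ 2 - c)`. Velocities that no incoming particle attains get the value `0`. -/
noncomputable def energyShift (g : ℝ → ℝ) (c s : ℝ) : ℝ :=
  if s < 0 ∧ c < s ^ 2 then g (-√(s ^ 2 - c)) else 0

section EnergyShift

variable {g : ℝ → ℝ} {r c s : ℝ}

lemma le_neg_sqrt_iff {t : ℝ} (ht : 0 < t) : s ≤ -√t ↔ s < 0 ∧ t ≤ s ^ 2 := by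
  constructor
  · intro h
    have hs : s < 0 := h.trans_lt (neg_lt_zero.2 (Real.sqrt_pos.2 ht))
    exact ⟨hs, by simpa using (Real.sqrt_le_left (neg_nonneg.2 hs.le)).1 (le_neg.1 h)⟩
  · rintro ⟨hs, hts⟩
    exact le_neg.1 ((Real.sqrt_le_left (neg_nonneg.2 hs.le)).2 (by simpa using hts))

lemma energyShift_eq_zero (hr : 0 < r) (hc : 0 ≤ c) (hg : ∀ s, -r ≤ s → g s = 0)
    (hs : -√(c + r ^ 2) < s) : energyShift g c s = 0 := by
  rw [energyShift]
  split_ifs with h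
  · have h_sq : s ^ 2 < c + r ^ 2 := by
      by_contra! h_le
      exact hs.not_ge ((le_neg_sqrt_iff (by positivity)).2 ⟨h.1, h_le⟩)
    exact hg _ (neg_le_neg (Real.sqrt_le_iff.2 ⟨hr.le, by linarith⟩))
  · rfl

lemma energyShift_eventuallyEq_zero (hr : 0 < r) (hc : 0 ≤ c) (hg : ∀ s, -r ≤ s → g s = 0)
    (hs : -√(c + r ^ 2) < s) : energyShift g c =ᶠ[nhds s] fun _ => 0 := by
  filter_upwards [Ioi_mem_nhds hs] with y hy using energyShift_eq_zero hr hc hg hy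

lemma energyShift_eventuallyEq_comp (hs : s < 0) (hc : c < s ^ 2) :
    energyShift g c =ᶠ[nhds s] fun y => g (-√(y ^ 2 - c)) := by
  have h_pow : ∀ᶠ y : ℝ in nhds s, c < y ^ 2 :=
    (continuous_pow 2).continuousAt.eventually_const_lt hc
  filter_upwards [Iio_mem_nhds hs, h_pow] with y hy hyc using if_pos ⟨hy, hyc⟩

lemma contDiff_energyShift {n : WithTop ℕ∞} (hr : 0 < r) (hc : 0 ≤ c) (hg : ContDiff ℝ n g)
    (hg_zero : ∀ s, -r ≤ s → g s = 0) : ContDiff ℝ n (energyShift g c) := by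
  refine contDiff_iff_contDiffAt.2 fun s => ?_
  rcases lt_or_ge (-√(c + r ^ 2)) s with hs | hs
  · exact contDiffAt_const.congr_of_eventuallyEq (energyShift_eventuallyEq_zero hr hc hg_zero hs)
  · obtain ⟨hs_neg, h_sq⟩ := (le_neg_sqrt_iff (by positivity)).1 hs
    have hcs : c < s ^ 2 := (lt_add_of_pos_right c (by positivity)).trans_le h_sq
    refine ContDiffAt.congr_of_eventuallyEq ?_ (energyShift_eventuallyEq_comp hs_neg hcs)
    exact hg.contDiffAt.comp s
      (((contDiffAt_id.pow 2).sub contDiffAt_const).sqrt (sub_pos.2 hcs).ne').neg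

lemma hasDerivAt_neg_sqrt_sq_sub (hc : c < s ^ 2) :
    HasDerivAt (fun y => -√(y ^ 2 - c)) (s / -√(s ^ 2 - c)) s := by
  have h := (((hasDerivAt_pow 2 s).sub_const c).sqrt (sub_pos.2 hc).ne').fun_neg
  refine h.congr_deriv ?_
  have := Real.sqrt_pos.2 (sub_pos.2 hc)
  field_simp
  push_cast
  ring

lemma deriv_energyShift (hg : Differentiable ℝ g) (hs : s < 0) (hc : c < s ^ 2) :
    deriv (energyShift g c) s = deriv g (-√(s ^ 2 - c)) * (s / -√(s ^ 2 - c)) := by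
  rw [(energyShift_eventuallyEq_comp hs hc).deriv_eq]
  exact ((hg _).hasDerivAt.comp s (hasDerivAt_neg_sqrt_sq_sub hc)).deriv

lemma hasDerivAt_div_neg_sqrt_sq_sub (hc : c < s ^ 2) :
    HasDerivAt (fun y => y / -√(y ^ 2 - c)) (-c / (-√(s ^ 2 - c)) ^ 3) s := by
  have h_pos : 0 < √(s ^ 2 - c) := Real.sqrt_pos.2 (sub_pos.2 hc)
  have h_sq : √(s ^ 2 - c) ^ 2 = s ^ 2 - c := Real.sq_sqrt (sub_pos.2 hc).le
  refine ((hasDerivAt_id' s).fun_div (hasDerivAt_neg_sqrt_sq_sub hc)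
    (neg_ne_zero.2 h_pos.ne')).congr_deriv ?_
  field_simp
  linear_combination -h_sq

lemma deriv_deriv_energyShift (hg : Differentiable ℝ g) (hg' : Differentiable ℝ (deriv g))
    (hs : s < 0) (hc : c < s ^ 2) :
    deriv (deriv (energyShift g c)) s =
      deriv (deriv g) (-√(s ^ 2 - c)) * (s / -√(s ^ 2 - c)) ^ 2 +
        deriv g (-√(s ^ 2 - c)) * (-c / (-√(s ^ 2 - c)) ^ 3) := by
  have h_pow : ∀ᶠ y : ℝ in nhds s, c < y ^ 2 :=
    (continuous_pow 2).continuousAt.eventually_const_lt hc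
  have h_deriv : deriv (energyShift g c) =ᶠ[nhds s]
      fun y => deriv g (-√(y ^ 2 - c)) * (y / -√(y ^ 2 - c)) := by
    filter_upwards [Iio_mem_nhds hs, h_pow] with y hy hyc using deriv_energyShift hg hy hyc
  have h_comp : HasDerivAt (fun y => deriv g (-√(y ^ 2 - c)))
      (deriv (deriv g) (-√(s ^ 2 - c)) * (s / -√(s ^ 2 - c))) s :=
    (hg' _).hasDerivAt.comp s (hasDerivAt_neg_sqrt_sq_sub hc)
  rw [h_deriv.deriv_eq, (h_comp.fun_mul (hasDerivAt_div_neg_sqrt_sq_sub hc)).deriv]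
  ring

lemma div_neg_sqrt_sq_sub_sq_le (hr : 0 < r) (hc : 0 ≤ c) (hs : c + r ^ 2 ≤ s ^ 2) :
    (s / -√(s ^ 2 - c)) ^ 2 ≤ 1 + c / r ^ 2 := by
  have hr2 : 0 < r ^ 2 := pow_pos hr 2
  have h_le : r ^ 2 ≤ s ^ 2 - c := by linarith
  have h_pos : 0 < s ^ 2 - c := hr2.trans_le h_le
  calc (s / -√(s ^ 2 - c)) ^ 2 = s ^ 2 / (s ^ 2 - c) := by
        rw [div_pow, neg_sq, Real.sq_sqrt h_pos.le]
    _ = 1 + c / (s ^ 2 - c) := by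
        field_simp
        ring
    _ ≤ 1 + c / r ^ 2 := by gcongr

lemma abs_deriv_energyShift_le (hr : 0 < r) (hc : 0 ≤ c) (hg : Differentiable ℝ g) (hs : s < 0)
    (hcs : c + r ^ 2 ≤ s ^ 2) :
    |deriv (energyShift g c) s| ≤ (1 + c / r ^ 2) * |deriv g (-√(s ^ 2 - c))| := by
  have h_sq := div_neg_sqrt_sq_sub_sq_le hr hc hcs
  have h_one : 1 ≤ 1 + c / r ^ 2 := le_add_of_nonneg_right (by positivity)
  have h_abs : |s / -√(s ^ 2 - c)| ≤ 1 + c / r ^ 2 :=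
    abs_le_of_sq_le_sq (h_sq.trans (le_self_pow₀ h_one two_ne_zero)) (by positivity)
  rw [deriv_energyShift hg hs (by nlinarith), abs_mul, mul_comm]
  exact mul_le_mul_of_nonneg_right h_abs (abs_nonneg _)

lemma abs_deriv_deriv_energyShift_le (hr : 0 < r) (hc : 0 ≤ c) (hg : Differentiable ℝ g)
    (hg' : Differentiable ℝ (deriv g)) (hs : s < 0) (hcs : c + r ^ 2 ≤ s ^ 2) :
    |deriv (deriv (energyShift g c)) s| ≤ (1 + c / r ^ 2) * |deriv (deriv g) (-√(s ^ 2 - c))| +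
      c / r ^ 3 * |deriv g (-√(s ^ 2 - c))| := by
  have h_sqrt : r ≤ √(s ^ 2 - c) := Real.le_sqrt_of_sq_le (by linarith)
  have h_cube : |-c / (-√(s ^ 2 - c)) ^ 3| ≤ c / r ^ 3 := by
    rw [abs_div, abs_neg, abs_pow, abs_neg, abs_of_nonneg hc, abs_of_nonneg (Real.sqrt_nonneg _)]
    gcongr
  rw [deriv_deriv_energyShift hg hg' hs (by nlinarith)]
  refine (abs_add_le _ _).trans ?_
  rw [abs_mul, abs_mul, mul_comm, mul_comm |deriv g _|, abs_of_nonneg (sq_nonneg _)]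
  gcongr
  exact div_neg_sqrt_sq_sub_sq_le hr hc hcs

lemma abs_sub_neg_sqrt_sq_sub_le (hs : s < 0) (hc : 0 ≤ c) (hcs : c ≤ s ^ 2) :
    |s - -√(s ^ 2 - c)| ≤ √c := by
  have h_le : √(s ^ 2 - c) ≤ -s := Real.sqrt_le_iff.2 ⟨by linarith, by linarith [neg_sq s]⟩
  have h_sub : -s ≤ √(s ^ 2 - c) + √c := by
    refine le_of_abs_le (abs_le_of_sq_le_sq ?_ (by positivity))
    nlinarith [Real.sq_sqrt hc, Real.sq_sqrt (sub_nonneg.2 hcs),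
      mul_nonneg (Real.sqrt_nonneg (s ^ 2 - c)) (Real.sqrt_nonneg c)]
  exact abs_le.2 ⟨by linarith, by linarith [Real.sqrt_nonneg c]⟩

lemma abs_derivs_energyShift_le {T : ℝ} (hr : 0 < r) (hc : 0 ≤ c) (hg : ContDiff ℝ 2 g)
    (hs : s < 0) (hcs : c + r ^ 2 ≤ s ^ 2) (hg₁ : |deriv g (-√(s ^ 2 - c))| ≤ T)
    (hg₂ : |deriv (deriv g) (-√(s ^ 2 - c))| ≤ T) :
    |deriv (energyShift g c) s| ≤ (1 + c / r ^ 2 + c / r ^ 3) * T ∧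
      |deriv (deriv (energyShift g c)) s| ≤ (1 + c / r ^ 2 + c / r ^ 3) * T := by
  have hg_diff := hg.differentiable two_ne_zero
  have hT : 0 ≤ T := (abs_nonneg _).trans hg₁
  rw [add_mul]
  refine ⟨(abs_deriv_energyShift_le hr hc hg_diff hs hcs).trans
      (le_add_of_le_of_nonneg ?_ (by positivity)),
    (abs_deriv_deriv_energyShift_le hr hc hg_diff hg.differentiable_deriv_two hs hcs).trans ?_⟩ <;>
  gcongr

lemma exists_forall_c1MajorizedBy_deriv_energyShift {a b u B : ℝ} (hr : 0 < r) (hb : 0 ≤ b)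
    (hab : b < a) (hg : ContDiff ℝ 2 g) (hg_zero : ∀ s, -r ≤ s → g s = 0)
    (hg_maj : C1MajorizedBy (deriv g) (fun s => B * gauss a (s - u))) (c₀ : ℝ) :
    ∃ D, ∀ c, 0 ≤ c → c ≤ c₀ →
      C1MajorizedBy (deriv (energyShift g c)) (fun s => D * gauss b (s - u)) := by
  have hB : 0 ≤ B := nonneg_of_mul_nonneg_left (hg_maj.nonneg 0) (gauss_pos _ _)
  set A := Real.exp (a * b / (a - b) * √c₀ ^ 2)
  set P := fun c => 1 + c / r ^ 2 + c / r ^ 3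
  refine ⟨P c₀ * (B * A), fun c hc hc₀ => ?_⟩
  suffices h : ∀ s, |deriv (energyShift g c) s| ≤ P c * (B * A * gauss b (s - u)) ∧
      |deriv (deriv (energyShift g c)) s| ≤ P c * (B * A * gauss b (s - u)) from
    (C1MajorizedBy.of_deriv (contDiff_energyShift hr hc hg hg_zero).differentiable_deriv_two
      (fun s => (h s).1) (fun s => (h s).2)).mono fun s => by
        have := gauss_pos b (s - u)
        rw [mul_assoc (P c₀)]
        dsimp only [P]
        gcongr
  intro s
  rcases lt_or_ge (-√(c + r ^ 2)) s with hs | hs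
  · have h_gauss := gauss_pos b (s - u)
    have h_zero := energyShift_eventuallyEq_zero hr hc hg_zero hs
    rw [h_zero.deriv.deriv_eq, h_zero.deriv_eq]
    simp only [deriv_const', abs_zero, P]
    exact ⟨by positivity, by positivity⟩
  · obtain ⟨hs_neg, h_sq⟩ := (le_neg_sqrt_iff (by positivity)).1 hs
    have h_shift : |(s - u) - (-√(s ^ 2 - c) - u)| ≤ √c₀ := by
      rw [sub_sub_sub_cancel_right]
      exact (abs_sub_neg_sqrt_sq_sub_le hs_neg hc (by nlinarith)).trans (Real.sqrt_le_sqrt hc₀)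
    have h_maj : B * gauss a (-√(s ^ 2 - c) - u) ≤ B * A * gauss b (s - u) := by
      rw [mul_assoc]
      exact mul_le_mul_of_nonneg_left (gauss_le_exp_mul_gauss hb hab h_shift) hB
    exact abs_derivs_energyShift_le hr hc hg hs_neg h_sq ((hg_maj.abs_le _).trans h_maj)
      ((hg_maj.abs_deriv_le _).trans h_maj)

end EnergyShift

/-- The incoming distribution `s ↦ exp (-a (s - u)²) ψ(s)` in the velocity `s = ξ₁`: a Gaussian cut
off by `ψ`. -/
noncomputable def cutoffGauss (a u : ℝ) (ψ : ℝ → ℝ) (s : ℝ) : ℝ := gauss a (s - u) * ψ s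

section Cutoff

variable {a b u : ℝ} {ψ : ℝ → ℝ}

lemma cutoffGauss_eq_zero {r : ℝ} (hψ : ∀ s, -r ≤ s → ψ s = 0) (s : ℝ) (hs : -r ≤ s) :
    cutoffGauss a u ψ s = 0 := by
  rw [cutoffGauss, hψ s hs, mul_zero]

lemma contDiff_cutoffGauss {n : WithTop ℕ∞} (hψ : ContDiff ℝ n ψ) :
    ContDiff ℝ n (cutoffGauss a u ψ) :=
  ((contDiff_gauss a).comp (contDiff_id.sub contDiff_const)).mul hψ

lemma deriv_cutoffGauss (hψ : Differentiable ℝ ψ) (s : ℝ) :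
    deriv (cutoffGauss a u ψ) s = deriv (gauss a) (s - u) * ψ s + gauss a (s - u) * deriv ψ s := by
  have h_gauss : HasDerivAt (fun s => gauss a (s - u)) (deriv (gauss a) (s - u)) s :=
    (hasDerivAt_gauss a (s - u)).differentiableAt.hasDerivAt.comp_sub_const s u
  exact (h_gauss.fun_mul (hψ s).hasDerivAt).deriv

lemma exists_c1MajorizedBy_deriv_cutoffGauss {B : ℝ} (hab : b < a)
    (hψ : C1MajorizedBy ψ fun _ => B) (hψ' : C1MajorizedBy (deriv ψ) fun _ => B) (u : ℝ) :
    ∃ D, C1MajorizedBy (deriv (cutoffGauss a u ψ)) (fun s => D * gauss b (s - u)) := by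
  obtain ⟨B₀, h₀⟩ := exists_c1MajorizedBy_gauss hab
  obtain ⟨B₁, h₁⟩ := exists_c1MajorizedBy_deriv_gauss hab
  rw [funext (deriv_cutoffGauss hψ.differentiable)]
  refine ⟨2 * (B₁ + B₀) * B, (((h₁.comp_sub_const u).mul hψ).add
    ((h₀.comp_sub_const u).mul hψ')).mono fun s => le_of_eq ?_⟩
  ring

end Cutoff

section StationaryProfile

variable {ρ θ r u : ℝ} {ψ Φs : ℝ → ℝ} {x : ℝ}

lemma maxwellian_eq (ρ θ u : ℝ) (ξ : ℝ × ℝ × ℝ) :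
    Maxwellian ρ θ u ξ = ρ * (2 * π * θ) ^ (-(3 : ℝ) / 2) *
      (gauss (2 * θ)⁻¹ (ξ.1 - u) * (gauss (2 * θ)⁻¹ ξ.2.1 * gauss (2 * θ)⁻¹ ξ.2.2)) := by
  simp only [Maxwellian, gauss, ← Real.exp_add]
  ring_nf

lemma sqrt_maxwellian (hρ : 0 < ρ) (hθ : 0 < θ) (u : ℝ) (ξ : ℝ × ℝ × ℝ) :
    √(Maxwellian ρ θ u ξ) = √(ρ * (2 * π * θ) ^ (-(3 : ℝ) / 2)) *
      (gauss ((2 * θ)⁻¹ / 2) (ξ.1 - u) *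
        (gauss ((2 * θ)⁻¹ / 2) ξ.2.1 * gauss ((2 * θ)⁻¹ / 2) ξ.2.2)) := by
  rw [maxwellian_eq, Real.sqrt_mul (by positivity), Real.sqrt_mul (gauss_pos _ _).le,
    Real.sqrt_mul (gauss_pos _ _).le, sqrt_gauss, sqrt_gauss, sqrt_gauss]

lemma statF_eq (ρ θ u : ℝ) (ψ Φs : ℝ → ℝ) (x s : ℝ) (η : ℝ × ℝ) :
    statF ρ θ u ψ Φs x (s, η) = ρ * (2 * π * θ) ^ (-(3 : ℝ) / 2) *
      (gauss (2 * θ)⁻¹ η.1 * gauss (2 * θ)⁻¹ η.2) *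
      energyShift (cutoffGauss (2 * θ)⁻¹ u ψ) (2 * Φs x) s := by
  simp only [statF, energyShift]
  split_ifs
  · rw [maxwellian_eq, cutoffGauss]
    ring
  · rw [mul_zero]

lemma contDiff_statF {n : WithTop ℕ∞} (hr : 0 < r) (hψ : ContDiff ℝ n ψ)
    (hψ_zero : ∀ s, -r ≤ s → ψ s = 0) (hΦ : 0 ≤ Φs x) (η : ℝ × ℝ) :
    ContDiff ℝ n fun s => statF ρ θ u ψ Φs x (s, η) := by
  simp only [statF_eq]
  exact contDiff_const.mul (contDiff_energyShift hr (by positivity) (contDiff_cutoffGauss hψ)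
    (cutoffGauss_eq_zero hψ_zero))

/-- The function `∂_{ξ₁}F^s(x, ξ) / M∞(ξ)^{1/2}` of `ξ`, whose gradient is to be estimated. -/
noncomputable def weightedDeriv (ρ θ u : ℝ) (ψ Φs : ℝ → ℝ) (x : ℝ) (ξ : ℝ × ℝ × ℝ) : ℝ :=
  deriv (fun s => statF ρ θ u ψ Φs x (s, ξ.2)) ξ.1 / √(Maxwellian ρ θ u ξ)

lemma weightedDeriv_eq (hρ : 0 < ρ) (hθ : 0 < θ) (u : ℝ) (ψ Φs : ℝ → ℝ) (x : ℝ) :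
    weightedDeriv ρ θ u ψ Φs x = fun ξ => √(ρ * (2 * π * θ) ^ (-(3 : ℝ) / 2)) *
      ((deriv (energyShift (cutoffGauss (2 * θ)⁻¹ u ψ) (2 * Φs x)) ξ.1 *
          gauss (-((2 * θ)⁻¹ / 2)) (ξ.1 - u)) *
        (gauss ((2 * θ)⁻¹ / 2) ξ.2.1 * gauss ((2 * θ)⁻¹ / 2) ξ.2.2)) := by
  ext ξ
  have hK : 0 < ρ * (2 * π * θ) ^ (-(3 : ℝ) / 2) := by positivity
  simp only [weightedDeriv, statF_eq, deriv_const_mul_field, sqrt_maxwellian hρ hθ, gauss_neg,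
    ← gauss_half_sq (2 * θ)⁻¹ ξ.2.1, ← gauss_half_sq (2 * θ)⁻¹ ξ.2.2]
  set K := ρ * (2 * π * θ) ^ (-(3 : ℝ) / 2)
  set a := (2 * θ)⁻¹ / 2
  have h₁ := gauss_pos a (ξ.1 - u)
  have h₂ := gauss_pos a ξ.2.1
  have h₃ := gauss_pos a ξ.2.2
  field_simp
  rw [Real.sq_sqrt hK.le, mul_comm]

lemma exists_forall_c1MajorizedBy_weightedDeriv (hρ : 0 < ρ) (hθ : 0 < θ) (hr : 0 < r)
    (hψ : ContDiff ℝ 2 ψ) (hψ_zero : ∀ s, -r ≤ s → ψ s = 0)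
    (hψ_bdd : ∃ B, ∀ s, |ψ s| ≤ B ∧ |deriv ψ s| ≤ B ∧ |deriv (deriv ψ) s| ≤ B) (u δ : ℝ) :
    ∃ b : ℝ × ℝ × ℝ → ℝ, Integrable (fun ξ => b ξ ^ 2) ∧
      ∀ (Φs : ℝ → ℝ) (x : ℝ), 0 ≤ Φs x → Φs x ≤ δ →
        C1MajorizedBy (weightedDeriv ρ θ u ψ Φs x) b := by
  obtain ⟨B, hB⟩ := hψ_bdd
  have hψ₀ : C1MajorizedBy ψ fun _ => B :=
    .of_deriv (hψ.differentiable two_ne_zero) (fun s => (hB s).1) fun s => (hB s).2.1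
  have hψ₁ : C1MajorizedBy (deriv ψ) fun _ => B :=
    .of_deriv hψ.differentiable_deriv_two (fun s => (hB s).2.1) fun s => (hB s).2.2
  -- The Gaussian exponent in `ξ₁` drops from `a` to `7 / 8 * a` on differentiating, to `3 / 4 * a`
  -- on shifting the velocity, and by `a / 2` on dividing by `M∞^{1/2}`.
  set a := (2 * θ)⁻¹
  have ha_pos : 0 < a := by positivity
  obtain ⟨D₁, h₁⟩ := exists_c1MajorizedBy_deriv_cutoffGauss (a := a) (b := 7 / 8 * a)
    (by linarith) hψ₀ hψ₁ u
  obtain ⟨D₂, h₂⟩ := exists_forall_c1MajorizedBy_deriv_energyShift (b := 3 / 4 * a) hr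
    (by positivity) (by linarith) (contDiff_cutoffGauss hψ)
    (cutoffGauss_eq_zero hψ_zero) h₁ (2 * δ)
  obtain ⟨D₃, h₃⟩ := exists_forall_c1MajorizedBy_mul_gauss (a := 3 / 4 * a) (b := a / 8)
    (k := -(a / 2)) (by linarith) u D₂
  obtain ⟨D₄, h₄⟩ := exists_c1MajorizedBy_gauss (a := a / 2) (b := a / 8) (by linarith)
  refine ⟨_, ?_, fun Φs x hΦ_nonneg hΦ_le => by
    rw [weightedDeriv_eq hρ hθ]
    exact ((h₃ _ (h₂ (2 * Φs x) (by positivity) (by linarith))).mul_prod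
      (h₄.mul_prod h₄)).const_mul _⟩
  have h_sq : Integrable fun y => gauss (a / 8) y ^ 2 := integrable_gauss_sq (by positivity)
  simp only [mul_pow]
  exact ((((h_sq.comp_sub_right u).const_mul _).mul_prod
    (((h_sq.const_mul _).mul_prod (h_sq.const_mul _)).const_mul _)).const_mul _).const_mul _

end StationaryProfile

section ConstantOutsideInterval

variable {f : ℝ → ℝ} {a b k l : ℝ}

lemma hasCompactSupport_deriv_of_eq_const (ha : ∀ s, s ≤ a → f s = k) (hb : ∀ s, b ≤ s → f s = l) :
    HasCompactSupport (deriv f) := by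
  refine HasCompactSupport.intro (isCompact_Icc (a := a) (b := b)) fun s hs => ?_
  rcases not_and_or.1 hs with h | h
  · have h_eq : f =ᶠ[nhds s] fun _ => k := by
      filter_upwards [Iio_mem_nhds (not_le.1 h)] with y hy using ha y hy.le
    rw [h_eq.deriv_eq, deriv_const]
  · have h_eq : f =ᶠ[nhds s] fun _ => l := by
      filter_upwards [Ioi_mem_nhds (not_le.1 h)] with y hy using hb y hy.le
    rw [h_eq.deriv_eq, deriv_const]

lemma exists_abs_le_of_eq_const (hf : Continuous f) (ha : ∀ s, s ≤ a → f s = k)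
    (hb : ∀ s, b ≤ s → f s = l) : ∃ B, ∀ s, |f s| ≤ B := by
  obtain ⟨B, hB⟩ := (isCompact_Icc (a := a) (b := b)).exists_bound_of_continuousOn hf.continuousOn
  refine ⟨max B (max |k| |l|), fun s => ?_⟩
  rcases le_total s a with hsa | hsa
  · rw [ha s hsa]
    exact le_max_of_le_right (le_max_left _ _)
  rcases le_total b s with hsb | hsb
  · rw [hb s hsb]
    exact le_max_of_le_right (le_max_right _ _)
  · exact le_max_of_le_left (hB s ⟨hsa, hsb⟩)

lemma exists_abs_derivs_le_of_eq_const (hf : ContDiff ℝ 2 f) (ha : ∀ s, s ≤ a → f s = k)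
    (hb : ∀ s, b ≤ s → f s = l) :
    ∃ B, ∀ s, |f s| ≤ B ∧ |deriv f s| ≤ B ∧ |deriv (deriv f) s| ≤ B := by
  have h_supp := hasCompactSupport_deriv_of_eq_const ha hb
  have h_cont : Continuous (deriv (deriv f)) := by
    simpa only [iteratedDeriv_succ, iteratedDeriv_zero] using hf.continuous_iteratedDeriv 2 le_rfl
  obtain ⟨B₀, h₀⟩ := exists_abs_le_of_eq_const hf.continuous ha hb
  obtain ⟨B₁, h₁⟩ := h_supp.exists_bound_of_continuous hf.differentiable_deriv_two.continuous
  obtain ⟨B₂, h₂⟩ := h_supp.deriv.exists_bound_of_continuous h_cont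
  exact ⟨max B₀ (max B₁ B₂), fun s => ⟨le_max_of_le_left (h₀ s),
    le_max_of_le_right (le_max_of_le_left (h₁ s)), le_max_of_le_right (le_max_of_le_right (h₂ s))⟩⟩

end ConstantOutsideInterval

theorem stationary_xi_gradient_bound_general {ρ θ r : ℝ} (hρ : 0 < ρ) (hθ : 0 < θ) (hr : 0 < r)
    {ψ : ℝ → ℝ} (hψ : ContDiff ℝ 2 ψ) (hψ_zero : ∀ s, -r ≤ s → ψ s = 0)
    (hψ_bdd : ∃ B, ∀ s, |ψ s| ≤ B ∧ |deriv ψ s| ≤ B ∧ |deriv (deriv ψ) s| ≤ B) (u δ : ℝ) :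
    ∃ C > 0, ∀ (Φs : ℝ → ℝ) (x : ℝ), 0 ≤ Φs x → Φs x ≤ δ →
      (∀ ξ : ℝ × ℝ × ℝ, DifferentiableAt ℝ (fun s => statF ρ θ u ψ Φs x (s, ξ.2)) ξ.1) ∧
      Differentiable ℝ (weightedDeriv ρ θ u ψ Φs x) ∧
      Integrable (fun ξ => ‖fderiv ℝ (weightedDeriv ρ θ u ψ Φs x) ξ‖ ^ 2) ∧
      √(∫ ξ, ‖fderiv ℝ (weightedDeriv ρ θ u ψ Φs x) ξ‖ ^ 2) ≤ C := by
  obtain ⟨b, hb, h_maj⟩ :=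
    exists_forall_c1MajorizedBy_weightedDeriv hρ hθ hr hψ hψ_zero hψ_bdd u δ
  refine ⟨√(∫ ξ, b ξ ^ 2) + 1, by positivity, fun Φs x hΦ hΦδ => ?_⟩
  have h := h_maj Φs x hΦ hΦδ
  refine ⟨fun ξ => (contDiff_statF hr hψ hψ_zero hΦ ξ.2).differentiable two_ne_zero ξ.1,
    h.differentiable, h.integrable_norm_fderiv_sq hb, ?_⟩
  exact (Real.sqrt_le_sqrt (h.integral_norm_fderiv_sq_le hb)).trans
    (le_add_of_nonneg_right zero_le_one)

/-- `sup_{x ≥ 0} ‖∇_ξ(∂_{ξ₁}F^s/M∞^{1/2})(x,·)‖_{L²_ξ} ≤ C`. -/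
theorem stationary_xi_gradient_bound
    (ρ θ r σ u : ℝ) (hρ : 0 < ρ) (hθ : 0 < θ) (hr : 0 < r) (hσ : 0 < σ)
    (hu : u < 0) (hu2 : r + 2*σ < |u|)
    (ψ : ℝ → ℝ) (hψ : ContDiff ℝ (⊤ : ℕ∞) ψ) (hψ0 : ∀ s, 0 ≤ ψ s) (hψ1 : ∀ s, ψ s ≤ 1)
    (hψa : ∀ s, -r ≤ s → ψ s = 0) (hψb : ∀ s, s ≤ -r - σ → ψ s = 1) :
    ∃ δ₀ > 0, ∃ C > 0, ∀ (Φb : ℝ) (Φs : ℝ → ℝ),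
      0 < Φb → Φb ≤ δ₀ → (∀ x ≥ (0:ℝ), 0 ≤ Φs x ∧ Φs x ≤ Φb) →
      ∀ x ≥ (0:ℝ),
        (∀ ξ : ℝ × ℝ × ℝ, DifferentiableAt ℝ
          (fun s => statF ρ θ u ψ Φs x (s, ξ.2)) ξ.1) ∧
        (∀ ξ : ℝ × ℝ × ℝ, DifferentiableAt ℝ
          (fun η : ℝ × ℝ × ℝ => deriv (fun s => statF ρ θ u ψ Φs x (s, η.2)) η.1 /
            Real.sqrt (Maxwellian ρ θ u η)) ξ) ∧
        Real.sqrt (∫ ξ : ℝ × ℝ × ℝ,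
            ‖fderiv ℝ (fun η : ℝ × ℝ × ℝ =>
              deriv (fun s => statF ρ θ u ψ Φs x (s, η.2)) η.1 /
                Real.sqrt (Maxwellian ρ θ u η)) ξ‖^2)
          ≤ C := by
  have hψ_two : ContDiff ℝ 2 ψ := hψ.of_le (WithTop.coe_le_coe.2 le_top)
  obtain ⟨C, hC, h⟩ := stationary_xi_gradient_bound_general hρ hθ hr hψ_two hψa
    (exists_abs_derivs_le_of_eq_const hψ_two hψb hψa) u 1
  refine ⟨1, one_pos, C, hC, fun Φb Φs _ hΦb hΦ x hx => ?_⟩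
  obtain ⟨h_statF, h_diff, -, h_le⟩ := h Φs x (hΦ x hx).1 ((hΦ x hx).2.trans hΦb)
  exact ⟨h_statF, h_diff, h_le⟩
end

section
/- Let n_e ∈ C²(ℝ) satisfy n_e(0) = 1, n_e'(0) = −1, and n_e'(Φ) < 0 for all Φ ∈ ℝ, and let β ∈ (0,1). Then there exist constants δ₀ > 0 and C > 0, both independent of β, such that the following holds. Let Φ_b > 0 and let Φ^s ∈ C¹([0,∞)) satisfy 0 ≤ Φ^s(x) ≤ Φ_b and |∂_xΦ^s(x)| ≤ Φ_b for all x ≥ 0; let n ∈ C¹([0,∞)) with ∫₀^∞ e^{βx}(|n|² + |∂_x n|²) dx < ∞; and let φ ∈ C³([0,∞)) solve ∂_{xx}φ = n − (n_e(Φ^s + φ) − n_e(Φ^s)) on (0,∞) with φ(0) = 0, lim_{x→∞} φ(x) = 0 and ∫₀^∞ e^{βx} Σ_{j=0}^{3} |∂_x^j φ|² dx < ∞. If Φ_b + ( ∫₀^∞ (|n|² + |∂_x n|²) dx )^{1/2} ≤ δ₀, then for k = 0 and k = 1: Σ_{j=0}^{2} ∫₀^∞ e^{βx} |∂_x^{k+j}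 φ|² dx ≤ C Σ_{i=0}^{k} ∫₀^∞ e^{βx} |∂_x^i n|² dx. -/
open MeasureTheory Real Set Filter

open scoped NNReal

/-! The maximum principle, with the constants `±r` as barriers, confines `φ` to a small interval on
which `ne` decreases at a definite rate `c`. There `φ * (ne (Φs + φ) - ne Φs) ≤ -c * φ ^ 2`, so
multiplying the equation by `exp (β * x) * φ` and integrating by parts yields the energy form
`c * φ ^ 2 + β * φ * φ' + φ' ^ 2`. It is positive definite exactly when `β ^ 2 < 4 * c`, which is
what limits the weight. The higher derivatives are then read off pointwise from the equation and
its derivative. -/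

/-- The integral of `exp (β * x) * f x` over the half-line `x > 0`, the square of the weighted
`L²` norm of `g` when `f = g ^ 2`. It is a lower integral, so that it is `⊤` rather than `0` when
a nonnegative `f` is not integrable; negative values of `f` are truncated to `0`. -/
noncomputable def expWeightedLIntegral (β : ℝ) (f : ℝ → ℝ) : ENNReal :=
  ∫⁻ x in Ioi (0 : ℝ), ENNReal.ofReal (exp (β * x) * f x)

section ExpWeightedLIntegral

variable {β : ℝ} {f g u v : ℝ → ℝ}

lemma expWeightedLIntegral_mono (h : ∀ x > 0, f x ≤ g x) :
    expWeightedLIntegral β f ≤ expWeightedLIntegral β g :=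
  setLIntegral_mono' measurableSet_Ioi fun x hx =>
    ENNReal.ofReal_le_ofReal (mul_le_mul_of_nonneg_left (h x hx) (exp_pos _).le)

lemma expWeightedLIntegral_const_mul {K : ℝ} (hK : 0 ≤ K) (f : ℝ → ℝ) :
    expWeightedLIntegral β (fun x => K * f x) =
      ENNReal.ofReal K * expWeightedLIntegral β f := by
  simp only [expWeightedLIntegral, ← lintegral_const_mul' _ _ ENNReal.ofReal_ne_top,
    ← ENNReal.ofReal_mul hK, mul_left_comm]

lemma expWeightedLIntegral_add_le (hfm : Measurable f) :
    expWeightedLIntegral β (fun x => f x + g x) ≤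
      expWeightedLIntegral β f + expWeightedLIntegral β g := by
  simp only [expWeightedLIntegral, mul_add]
  rw [← lintegral_add_left (by fun_prop)]
  exact lintegral_mono fun x => ENNReal.ofReal_add_le

lemma expWeightedLIntegral_le_of_le_mul_add {K A : ℝ} (hK : 0 ≤ K) (hA : 0 ≤ A)
    (hfm : Measurable f) (hu : ∀ x > 0, u x ≤ K * (f x + g x))
    (hfg : expWeightedLIntegral β f ≤ ENNReal.ofReal A * expWeightedLIntegral β g) :
    expWeightedLIntegral β u ≤ ENNReal.ofReal (K * (A + 1)) * expWeightedLIntegral β g := by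
  calc expWeightedLIntegral β u
      ≤ expWeightedLIntegral β (fun x => K * (f x + g x)) := expWeightedLIntegral_mono hu
    _ ≤ ENNReal.ofReal K * (expWeightedLIntegral β f + expWeightedLIntegral β g) := by
        rw [expWeightedLIntegral_const_mul hK]
        gcongr
        exact expWeightedLIntegral_add_le hfm
    _ ≤ ENNReal.ofReal K * (ENNReal.ofReal A * expWeightedLIntegral β g +
          expWeightedLIntegral β g) := by gcongr
    _ = ENNReal.ofReal (K * (A + 1)) * expWeightedLIntegral β g := by
        rw [ENNReal.ofReal_mul hK, ENNReal.ofReal_add hA zero_le_one, ENNReal.ofReal_one]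
        ring

lemma integrableOn_exp_mul_of_expWeightedLIntegral_lt_top (hfm : Measurable f)
    (hf : ∀ x, 0 ≤ f x) (h : expWeightedLIntegral β f < ⊤) :
    IntegrableOn (fun x => exp (β * x) * f x) (Ioi 0) :=
  ⟨by fun_prop, (hasFiniteIntegral_iff_ofReal
    (Eventually.of_forall fun x => mul_nonneg (exp_pos _).le (hf x))).2 h⟩

lemma integrableOn_of_expWeightedLIntegral_lt_top (hβ : 0 ≤ β) (hfm : Measurable f)
    (hf : ∀ x, 0 ≤ f x) (h : expWeightedLIntegral β f < ⊤) : IntegrableOn f (Ioi 0) := by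
  refine Integrable.mono' (integrableOn_exp_mul_of_expWeightedLIntegral_lt_top hfm hf h)
    hfm.aestronglyMeasurable ((ae_restrict_mem measurableSet_Ioi).mono fun x hx => ?_)
  rw [norm_eq_abs, abs_of_nonneg (hf x)]
  exact le_mul_of_one_le_left (hf x) (one_le_exp (mul_nonneg hβ (le_of_lt hx)))

lemma expWeightedLIntegral_eq_ofReal_integral (hf : ∀ x, 0 ≤ f x)
    (h : IntegrableOn (fun x => exp (β * x) * f x) (Ioi 0)) :
    expWeightedLIntegral β f = ENNReal.ofReal (∫ x in Ioi (0 : ℝ), exp (β * x) * f x) :=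
  (ofReal_integral_eq_lintegral_ofReal h
    (Eventually.of_forall fun x => mul_nonneg (exp_pos _).le (hf x))).symm

lemma integrableOn_exp_mul_mul (hu : Measurable u) (hv : Measurable v)
    (hui : expWeightedLIntegral β (fun x => u x ^ 2) < ⊤)
    (hvi : expWeightedLIntegral β (fun x => v x ^ 2) < ⊤) :
    IntegrableOn (fun x => exp (β * x) * (u x * v x)) (Ioi 0) := by
  have hsum := (integrableOn_exp_mul_of_expWeightedLIntegral_lt_top (by fun_prop)
    (fun x => sq_nonneg (u x)) hui).add (integrableOn_exp_mul_of_expWeightedLIntegral_lt_top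
    (by fun_prop) (fun x => sq_nonneg (v x)) hvi)
  refine Integrable.mono' hsum (by fun_prop) (Eventually.of_forall fun x => ?_)
  simp only [Pi.add_apply, norm_eq_abs, abs_mul, abs_of_pos (exp_pos _), ← mul_add]
  refine mul_le_mul_of_nonneg_left ?_ (exp_pos _).le
  nlinarith [two_mul_le_add_sq |u x| |v x|, sq_abs (u x), sq_abs (v x), sq_nonneg (u x),
    sq_nonneg (v x)]

end ExpWeightedLIntegral

section Sobolev

variable {f : ℝ → ℝ} {a : ℝ}

lemma sq_le_integral_Ioi_sq_add_deriv_sq (hf : ContDiff ℝ 1 f)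
    (hint : IntegrableOn (fun x => f x ^ 2 + deriv f x ^ 2) (Ioi a)) :
    f a ^ 2 ≤ ∫ x in Ioi a, (f x ^ 2 + deriv f x ^ 2) := by
  have hfc := hf.continuous
  have hderiv : ∀ x, HasDerivAt (fun x => f x ^ 2) (2 * f x * deriv f x) x := fun x => by
    simpa using (hf.differentiable one_ne_zero x).hasDerivAt.fun_pow 2
  have hbound : ∀ x, |2 * f x * deriv f x| ≤ f x ^ 2 + deriv f x ^ 2 := fun x => by
    simpa only [abs_mul, Nat.abs_ofNat, sq_abs] using two_mul_le_add_sq |f x| |deriv f x|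
  have hint_deriv : IntegrableOn (fun x => 2 * f x * deriv f x) (Ioi a) :=
    Integrable.mono' hint ((continuous_const.mul hfc).mul
      (hf.continuous_deriv le_rfl)).aestronglyMeasurable (Eventually.of_forall hbound)
  have hint_sq : IntegrableOn (fun x => f x ^ 2) (Ioi a) :=
    Integrable.mono' hint (by fun_prop) (Eventually.of_forall fun x => by
      rw [norm_eq_abs, abs_sq]
      exact le_add_of_nonneg_right (sq_nonneg _))
  have hlim := tendsto_zero_of_hasDerivAt_of_integrableOn_Ioi (fun x _ => hderiv x)
    hint_deriv hint_sq
  calc f a ^ 2 = ∫ x in Ioi a, -(2 * f x * deriv f x) := by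
        rw [integral_neg, integral_Ioi_of_hasDerivAt_of_tendsto
          (hderiv a).continuousAt.continuousWithinAt (fun x _ => hderiv x) hint_deriv hlim]
        ring
    _ ≤ ∫ x in Ioi a, (f x ^ 2 + deriv f x ^ 2) :=
        integral_mono hint_deriv.neg hint fun x => (neg_le_abs _).trans (hbound x)

lemma abs_le_sqrt_integral_Ioi_sq_add_deriv_sq (hf : ContDiff ℝ 1 f)
    (hint : IntegrableOn (fun x => f x ^ 2 + deriv f x ^ 2) (Ioi a)) {x : ℝ} (hx : a ≤ x) :
    |f x| ≤ √(∫ y in Ioi a, (f y ^ 2 + deriv f y ^ 2)) := by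
  have hsub : Ioi x ⊆ Ioi a := Ioi_subset_Ioi hx
  exact abs_le_sqrt <| (sq_le_integral_Ioi_sq_add_deriv_sq hf (hint.mono_set hsub)).trans <|
    setIntegral_mono_set hint (Eventually.of_forall fun y => by positivity) hsub.eventuallyLE

end Sobolev

section MaximumPrinciple

lemma deriv_deriv_nonpos_of_isLocalMax {f : ℝ → ℝ} {x : ℝ} (h : IsLocalMax f x)
    (hc : ContinuousAt f x) : deriv (deriv f) x ≤ 0 := by
  by_contra! hpos
  have hmin := isLocalMin_of_deriv_deriv_pos hpos h.deriv_eq_zero hc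
  have hconst : f =ᶠ[nhds x] fun _ => f x := by
    filter_upwards [h, hmin] with y hle hge using le_antisymm hle hge
  have hzero : deriv (deriv f) x = 0 := by
    rw [hconst.deriv.deriv_eq]
    simp
  exact hpos.ne' hzero

lemma le_of_forall_deriv_deriv_pos_of_tendsto_zero {f : ℝ → ℝ} {r : ℝ} (hf : Continuous f)
    (hr : 0 < r) (h0 : f 0 = 0) (hlim : Tendsto f atTop (nhds 0))
    (hpos : ∀ x > 0, r < f x → 0 < deriv (deriv f) x) : ∀ x ≥ 0, f x ≤ r := by
  intro x hx
  by_contra! hlt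
  obtain ⟨R, hR⟩ := eventually_atTop.1 (hlim.eventually (gt_mem_nhds hr))
  obtain ⟨z, hz, hmax⟩ := (isCompact_Icc (a := (0 : ℝ)) (b := max R x)).exists_isMaxOn
    ⟨x, hx, le_max_right _ _⟩ hf.continuousOn
  have hfz : r < f z := hlt.trans_le (hmax ⟨hx, le_max_right _ _⟩)
  have hz0 : 0 < z := lt_of_le_of_ne hz.1 fun h => by
    rw [← h, h0] at hfz
    linarith
  have hlocal : IsLocalMax f z := by
    filter_upwards [lt_mem_nhds hz0] with y hy
    rcases le_total y (max R x) with hyR | hyR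
    · exact hmax ⟨hy.le, hyR⟩
    · exact ((hR y ((le_max_left _ _).trans hyR)).trans hfz).le
  exact absurd (hpos z hz0 hfz) (deriv_deriv_nonpos_of_isLocalMax hlocal hf.continuousAt).not_gt

lemma abs_le_of_deriv_deriv_eq_monotone {φ : ℝ → ℝ} {F : ℝ → ℝ → ℝ} {r : ℝ}
    (hφ : Continuous φ) (hr : 0 < r) (h0 : φ 0 = 0) (hlim : Tendsto φ atTop (nhds 0))
    (heq : ∀ x > 0, deriv (deriv φ) x = F x (φ x)) (hmono : ∀ x > 0, Monotone (F x))
    (hupper : ∀ x > 0, 0 < F x r) (hlower : ∀ x > 0, F x (-r) < 0) : ∀ x ≥ 0, |φ x| ≤ r := by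
  have hle : ∀ x ≥ 0, φ x ≤ r :=
    le_of_forall_deriv_deriv_pos_of_tendsto_zero hφ hr h0 hlim fun x hx hlt => by
      rw [heq x hx]
      exact (hupper x hx).trans_le (hmono x hx hlt.le)
  have hge : ∀ x ≥ 0, -φ x ≤ r := by
    refine le_of_forall_deriv_deriv_pos_of_tendsto_zero (f := fun x => -φ x) hφ.neg hr
      (by rw [h0, neg_zero]) (by simpa only [neg_zero] using hlim.neg) fun x hx hlt => ?_
    have hneg : deriv (fun x => -φ x) = fun x => -deriv φ x := funext fun _ => deriv.fun_neg
    rw [hneg, deriv.fun_neg, heq x hx, neg_pos]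
    exact (hmono x hx (by linarith)).trans_lt (hlower x hx)
  exact fun x hx => abs_le.2 ⟨neg_le.1 (hge x hx), hle x hx⟩

end MaximumPrinciple

section Energy

lemma exists_forall_mul_sq_add_sq_le {b c : ℝ} (h : b ^ 2 < 4 * c) :
    ∃ κ > 0, ∀ β, |β| ≤ b → ∀ p q : ℝ,
      κ * (p ^ 2 + q ^ 2) ≤ c * p ^ 2 + β * (p * q) + q ^ 2 := by
  have hc : 0 < c := by nlinarith [sq_nonneg b]
  -- solves `(1 - κ) * (c - κ) = b ^ 2 / 4 + κ ^ 2`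
  set κ := (c - b ^ 2 / 4) / (1 + c)
  have hκ : κ * (1 + c) = c - b ^ 2 / 4 := div_mul_cancel₀ _ (by positivity)
  refine ⟨κ, div_pos (by linarith) (by linarith), fun β hβ p q => ?_⟩
  have hκ1 : 0 < 1 - κ := by nlinarith [sq_nonneg b]
  have hβb : β ^ 2 ≤ b ^ 2 := sq_le_sq' (abs_le.1 hβ).1 (abs_le.1 hβ).2
  have hdisc : 0 ≤ (1 - κ) * (c - κ) - β ^ 2 / 4 := by nlinarith [sq_nonneg κ]
  have hsquare : (1 - κ) * (c * p ^ 2 + β * (p * q) + q ^ 2 - κ * (p ^ 2 + q ^ 2)) =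
      ((1 - κ) * q + β / 2 * p) ^ 2 + ((1 - κ) * (c - κ) - β ^ 2 / 4) * p ^ 2 := by ring
  have hnonneg : 0 ≤ (1 - κ) * (c * p ^ 2 + β * (p * q) + q ^ 2 - κ * (p ^ 2 + q ^ 2)) := by
    rw [hsquare]
    positivity
  exact sub_nonneg.1 (nonneg_of_mul_nonneg_right hnonneg hκ1)

lemma sq_add_sq_le_of_coercive {κ c β p q a ν : ℝ} (hκ : 0 < κ)
    (hquad : κ * (p ^ 2 + q ^ 2) ≤ c * p ^ 2 + β * (p * q) + q ^ 2)
    (hcoer : c * p ^ 2 + p * ν ≤ p * a) :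
    p ^ 2 + q ^ 2 ≤ 2 * κ⁻¹ * (β * (p * q) + (q * q + p * a)) + κ⁻¹ ^ 2 * ν ^ 2 := by
  have hyoung : -(p * ν) ≤ κ / 2 * p ^ 2 + κ⁻¹ / 2 * ν ^ 2 := by
    have hsquare : κ / 2 * p ^ 2 + κ⁻¹ / 2 * ν ^ 2 + p * ν = κ / 2 * (p + κ⁻¹ * ν) ^ 2 := by
      field_simp
      ring
    linarith [mul_nonneg (half_pos hκ).le (sq_nonneg (p + κ⁻¹ * ν))]
  have habsorb : κ / 2 * (p ^ 2 + q ^ 2) ≤ β * (p * q) + (q * q + p * a) + κ⁻¹ / 2 * ν ^ 2 := by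
    nlinarith [mul_nonneg hκ.le (sq_nonneg q)]
  calc p ^ 2 + q ^ 2 = 2 * κ⁻¹ * (κ / 2 * (p ^ 2 + q ^ 2)) := by field_simp
    _ ≤ 2 * κ⁻¹ * (β * (p * q) + (q * q + p * a) + κ⁻¹ / 2 * ν ^ 2) := by gcongr
    _ = 2 * κ⁻¹ * (β * (p * q) + (q * q + p * a)) + κ⁻¹ ^ 2 * ν ^ 2 := by ring

variable {β : ℝ} {φ : ℝ → ℝ}

lemma integral_exp_mul_deriv_mul_deriv_eq_zero (hφ : ContDiff ℝ 2 φ) (hφ0 : φ 0 = 0)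
    (hint : expWeightedLIntegral β
      (fun x => φ x ^ 2 + deriv φ x ^ 2 + deriv (deriv φ) x ^ 2) < ⊤) :
    IntegrableOn (fun x => exp (β * x) *
        (β * (φ x * deriv φ x) + (deriv φ x * deriv φ x + φ x * deriv (deriv φ) x))) (Ioi 0) ∧
      ∫ x in Ioi (0 : ℝ), exp (β * x) *
        (β * (φ x * deriv φ x) + (deriv φ x * deriv φ x + φ x * deriv (deriv φ) x)) = 0 := by
  have hφ' : ContDiff ℝ 1 (deriv φ) := ContDiff.deriv' (by rwa [one_add_one_eq_two])
  have hm0 := hφ.continuous.measurable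
  have hm1 := measurable_deriv φ
  have hm2 := measurable_deriv (deriv φ)
  have hi0 : expWeightedLIntegral β (fun x => φ x ^ 2) < ⊤ :=
    (expWeightedLIntegral_mono fun x _ => by
      linarith [sq_nonneg (deriv φ x), sq_nonneg (deriv (deriv φ) x)]).trans_lt hint
  have hi1 : expWeightedLIntegral β (fun x => deriv φ x ^ 2) < ⊤ :=
    (expWeightedLIntegral_mono fun x _ => by
      linarith [sq_nonneg (φ x), sq_nonneg (deriv (deriv φ) x)]).trans_lt hint
  have hi2 : expWeightedLIntegral β (fun x => deriv (deriv φ) x ^ 2) < ⊤ :=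
    (expWeightedLIntegral_mono fun x _ => by
      linarith [sq_nonneg (φ x), sq_nonneg (deriv φ x)]).trans_lt hint
  have hboundary := integrableOn_exp_mul_mul hm0 hm1 hi0 hi1
  have hderiv_int : IntegrableOn (fun x => exp (β * x) *
      (β * (φ x * deriv φ x) + (deriv φ x * deriv φ x + φ x * deriv (deriv φ) x))) (Ioi 0) :=
    ((hboundary.const_mul β).add ((integrableOn_exp_mul_mul hm1 hm1 hi1 hi1).add
      (integrableOn_exp_mul_mul hm0 hm2 hi0 hi2))).congr
      (Eventually.of_forall fun x => by simp only [Pi.add_apply]; ring)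
  have hderiv : ∀ x, HasDerivAt (fun x => exp (β * x) * (φ x * deriv φ x)) (exp (β * x) *
      (β * (φ x * deriv φ x) + (deriv φ x * deriv φ x + φ x * deriv (deriv φ) x))) x := fun x => by
    have hexp : HasDerivAt (fun x => exp (β * x)) (exp (β * x) * β) x := by
      simpa using ((hasDerivAt_id x).const_mul β).exp
    exact (hexp.fun_mul ((hφ.differentiable two_ne_zero x).hasDerivAt.fun_mul
      (hφ'.differentiable one_ne_zero x).hasDerivAt)).congr_deriv (by ring)
  have hlim := tendsto_zero_of_hasDerivAt_of_integrableOn_Ioi (fun x _ => hderiv x)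
    hderiv_int hboundary
  refine ⟨hderiv_int, ?_⟩
  rw [integral_Ioi_of_hasDerivAt_of_tendsto (hderiv 0).continuousAt.continuousWithinAt
    (fun x _ => hderiv x) hderiv_int hlim, hφ0]
  ring

lemma expWeightedLIntegral_sq_add_deriv_sq_le {κ c : ℝ} {n : ℝ → ℝ} (hκ : 0 < κ)
    (hquad : ∀ p q : ℝ, κ * (p ^ 2 + q ^ 2) ≤ c * p ^ 2 + β * (p * q) + q ^ 2)
    (hn : Measurable n) (hφ : ContDiff ℝ 2 φ) (hφ0 : φ 0 = 0)
    (hint : expWeightedLIntegral β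
      (fun x => φ x ^ 2 + deriv φ x ^ 2 + deriv (deriv φ) x ^ 2) < ⊤)
    (hcoer : ∀ x > 0, c * φ x ^ 2 + φ x * n x ≤ φ x * deriv (deriv φ) x) :
    expWeightedLIntegral β (fun x => φ x ^ 2 + deriv φ x ^ 2) ≤
      ENNReal.ofReal (κ⁻¹ ^ 2) * expWeightedLIntegral β (fun x => n x ^ 2) := by
  rcases eq_top_or_lt_top (expWeightedLIntegral β fun x => n x ^ 2) with htop | hn_int
  · rw [htop, ENNReal.mul_top (ENNReal.ofReal_pos.2 (by positivity)).ne']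
    exact le_top
  have hφm := hφ.continuous.measurable
  obtain ⟨hflux_int, hflux⟩ := integral_exp_mul_deriv_mul_deriv_eq_zero hφ hφ0 hint
  have henergy_int := integrableOn_exp_mul_of_expWeightedLIntegral_lt_top
    (f := fun x => φ x ^ 2 + deriv φ x ^ 2) (by fun_prop) (fun x => by positivity)
    ((expWeightedLIntegral_mono fun x _ => le_add_of_nonneg_right (sq_nonneg _)).trans_lt hint)
  have hsource_int := integrableOn_exp_mul_of_expWeightedLIntegral_lt_top (by fun_prop)
    (fun x => sq_nonneg (n x)) hn_int
  have hintegral : ∫ x in Ioi (0 : ℝ), exp (β * x) * (φ x ^ 2 + deriv φ x ^ 2) ≤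
      κ⁻¹ ^ 2 * ∫ x in Ioi (0 : ℝ), exp (β * x) * n x ^ 2 := by
    have hmono := setIntegral_mono_on henergy_int
      ((hflux_int.const_mul (2 * κ⁻¹)).add (hsource_int.const_mul (κ⁻¹ ^ 2))) measurableSet_Ioi
      fun x hx => by
        have hweighted := mul_le_mul_of_nonneg_left
          (sq_add_sq_le_of_coercive hκ (hquad _ (deriv φ x)) (hcoer x hx)) (exp_pos (β * x)).le
        simp only [Pi.add_apply]
        linarith
    simpa only [Pi.add_apply, integral_add (hflux_int.const_mul _) (hsource_int.const_mul _),
      integral_const_mul, hflux, mul_zero, zero_add] using hmono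
  rw [expWeightedLIntegral_eq_ofReal_integral (fun x => by positivity) henergy_int,
    expWeightedLIntegral_eq_ofReal_integral (fun x => by positivity) hsource_int,
    ← ENNReal.ofReal_mul (by positivity)]
  exact ENNReal.ofReal_le_ofReal hintegral

end Energy

/-- `f` decreases on `s` at rate at least `c`, and `f` and its derivative have Lipschitz constant
`Λ` there. This is all the local information on the electron density that the estimates use. -/
structure UniformlyDecreasingOn (f : ℝ → ℝ) (c : ℝ) (Λ : ℝ≥0) (s : Set ℝ) : Prop where
  mul_sub_le : ∀ x ∈ s, ∀ y ∈ s, x ≤ y → c * (y - x) ≤ f x - f y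
  abs_deriv_le : ∀ x ∈ s, |deriv f x| ≤ Λ
  lipschitzOnWith : LipschitzOnWith Λ f s
  lipschitzOnWith_deriv : LipschitzOnWith Λ (deriv f) s

lemma exists_uniformlyDecreasingOn_of_lt_neg_deriv {f : ℝ → ℝ} (hf : ContDiff ℝ 2 f) {a c : ℝ}
    (hc : c < -deriv f a) :
    ∃ ρ > 0, ∃ Λ, UniformlyDecreasingOn f c Λ (Metric.closedBall a ρ) := by
  have hf' : ContDiff ℝ 1 (deriv f) := ContDiff.deriv' (by rwa [one_add_one_eq_two])
  have hdiff : Differentiable ℝ f := hf.differentiable two_ne_zero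
  obtain ⟨ρ, hρ, hrate⟩ := Metric.nhds_basis_closedBall.eventually_iff.1
    (hf'.continuous.continuousAt.eventually (gt_mem_nhds (lt_neg.1 hc)))
  have hcompact := isCompact_closedBall a ρ
  have hconvex := convex_closedBall a ρ
  obtain ⟨L, hL⟩ :=
    hf'.locallyLipschitz.locallyLipschitzOn.exists_lipschitzOnWith_of_compact hcompact
  obtain ⟨B, hB⟩ := hcompact.exists_bound_of_continuousOn hf'.continuous.continuousOn
  have hbound : ∀ x ∈ Metric.closedBall a ρ, ‖deriv f x‖₊ ≤ max L B.toNNReal := fun x hx =>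
    le_max_of_le_right (NNReal.le_toNNReal_of_coe_le (hB x hx))
  refine ⟨ρ, hρ, max L B.toNNReal, ?_, hbound, ?_, hL.weaken (le_max_left _ _)⟩
  · intro x hx y hy hxy
    linarith [hconvex.image_sub_le_mul_sub_of_deriv_le hdiff.continuous.continuousOn
      hdiff.differentiableOn (fun z hz => (hrate (interior_subset hz)).le) x hx y hy hxy]
  · exact hconvex.lipschitzOnWith_of_nnnorm_deriv_le (fun x _ => hdiff x) hbound

namespace UniformlyDecreasingOn

variable {f : ℝ → ℝ} {c : ℝ} {Λ : ℝ≥0} {I : Set ℝ} {s t : ℝ}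

lemma mul_sq_add_mul_le (h : UniformlyDecreasingOn f c Λ I) (hs : s ∈ I) (hst : s + t ∈ I)
    (ν : ℝ) : c * t ^ 2 + t * ν ≤ t * (ν - (f (s + t) - f s)) := by
  rcases le_total 0 t with ht | ht
  · nlinarith [h.mul_sub_le s hs (s + t) hst (by linarith)]
  · nlinarith [h.mul_sub_le (s + t) hst s hs (by linarith)]

lemma sq_sub_increment_le (h : UniformlyDecreasingOn f c Λ I) (hs : s ∈ I) (hst : s + t ∈ I)
    (ν : ℝ) : (ν - (f (s + t) - f s)) ^ 2 ≤ 2 * ν ^ 2 + 2 * Λ ^ 2 * t ^ 2 := by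
  have hincr : |f (s + t) - f s| ≤ Λ * |t| := by
    simpa [dist_eq] using h.lipschitzOnWith.dist_le_mul _ hst _ hs
  have hsq : (f (s + t) - f s) ^ 2 ≤ (Λ * t) ^ 2 :=
    sq_le_sq.2 (by rwa [abs_mul, NNReal.abs_eq])
  nlinarith [sq_nonneg (ν + (f (s + t) - f s))]

lemma sq_sub_deriv_increment_le (h : UniformlyDecreasingOn f c Λ I) (hs : s ∈ I)
    (hst : s + t ∈ I) (ν' t' : ℝ) {s' : ℝ} (hs' : |s'| ≤ 1) :
    (ν' - (deriv f (s + t) * (s' + t') - deriv f s * s')) ^ 2 ≤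
      3 * (ν' ^ 2 + Λ ^ 2 * (t ^ 2 + t' ^ 2)) := by
  set p := deriv f (s + t) * t'
  set q := (deriv f (s + t) - deriv f s) * s'
  have hsplit : ν' - (deriv f (s + t) * (s' + t') - deriv f s * s') = ν' - p - q := by
    simp only [p, q]
    ring
  have hp : p ^ 2 ≤ (Λ * t') ^ 2 := sq_le_sq.2 (by
    rw [abs_mul, abs_mul, NNReal.abs_eq]
    exact mul_le_mul_of_nonneg_right (h.abs_deriv_le _ hst) (abs_nonneg _))
  have hincr : |deriv f (s + t) - deriv f s| ≤ Λ * |t| := by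
    simpa [dist_eq] using h.lipschitzOnWith_deriv.dist_le_mul _ hst _ hs
  have hq : q ^ 2 ≤ (Λ * t) ^ 2 := sq_le_sq.2 (by
    rw [abs_mul, abs_mul, NNReal.abs_eq]
    exact (mul_le_of_le_one_right (abs_nonneg _) hs').trans hincr)
  rw [hsplit]
  nlinarith [sq_nonneg (ν' + p), sq_nonneg (ν' + q), sq_nonneg (p - q)]

end UniformlyDecreasingOn

/-- The Poisson equation on `(0, ∞)` for the perturbation `φ` of the stationary potential `Φs`
caused by the perturbation `n` of the ion density, with electron density `ne`. -/
def IsPerturbedPoissonSolution (ne Φs n φ : ℝ → ℝ) : Prop :=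
  ∀ x > (0 : ℝ), deriv (deriv φ) x = n x - (ne (Φs x + φ x) - ne (Φs x))

namespace IsPerturbedPoissonSolution

variable {ne Φs n φ : ℝ → ℝ}

lemma abs_le_of_antitone (h : IsPerturbedPoissonSolution ne Φs n φ) (hne : Antitone ne)
    {c r : ℝ} {Λ : ℝ≥0} (hr : 0 < r)
    (hdec : UniformlyDecreasingOn ne c Λ (Metric.closedBall 0 (2 * r)))
    (hφ : Continuous φ) (h0 : φ 0 = 0) (hlim : Tendsto φ atTop (nhds 0))
    (hΦs : ∀ x > 0, |Φs x| ≤ r) (hn : ∀ x > 0, |n x| < c * r) : ∀ x ≥ 0, |φ x| ≤ r := by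
  have hmem : ∀ x > 0, Φs x ∈ Metric.closedBall 0 (2 * r) := fun x hx =>
    mem_closedBall_zero_iff.2 ((hΦs x hx).trans (by linarith))
  refine abs_le_of_deriv_deriv_eq_monotone hφ hr h0 hlim
    (F := fun x p => n x - (ne (Φs x + p) - ne (Φs x))) h
    (fun x _ p q hpq => sub_le_sub_left (sub_le_sub_right (hne (by gcongr)) _) _)
    (fun x hx => ?_) (fun x hx => ?_)
  · have hmem_add : Φs x + r ∈ Metric.closedBall 0 (2 * r) :=
      mem_closedBall_zero_iff.2 ((abs_add_le _ _).trans (by linarith [hΦs x hx, abs_of_pos hr]))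
    linarith [hdec.mul_sub_le _ (hmem x hx) _ hmem_add (by linarith), (abs_lt.1 (hn x hx)).1]
  · have hmem_sub : Φs x + -r ∈ Metric.closedBall 0 (2 * r) :=
      mem_closedBall_zero_iff.2 ((abs_add_le _ _).trans
        (by linarith [hΦs x hx, abs_neg r, abs_of_pos hr]))
    linarith [hdec.mul_sub_le _ hmem_sub _ (hmem x hx) (by linarith), (abs_lt.1 (hn x hx)).2]

lemma deriv_deriv_deriv_eq (h : IsPerturbedPoissonSolution ne Φs n φ) (hne : Differentiable ℝ ne)
    (hΦs : Differentiable ℝ Φs) (hn : Differentiable ℝ n) (hφ : Differentiable ℝ φ) {x : ℝ}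
    (hx : 0 < x) :
    deriv (deriv (deriv φ)) x =
      deriv n x - (deriv ne (Φs x + φ x) * (deriv Φs x + deriv φ x) -
        deriv ne (Φs x) * deriv Φs x) := by
  have hlocal : deriv (deriv φ) =ᶠ[nhds x] fun y => n y - (ne (Φs y + φ y) - ne (Φs y)) := by
    filter_upwards [lt_mem_nhds hx] with y hy using h y hy
  have hΦs_deriv := (hΦs x).hasDerivAt
  rw [hlocal.deriv_eq]
  exact ((hn x).hasDerivAt.sub (((hne _).hasDerivAt.comp x (hΦs_deriv.add (hφ x).hasDerivAt)).sub
    ((hne _).hasDerivAt.comp x hΦs_deriv))).deriv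

lemma sum_sq_iterate_deriv_le (h : IsPerturbedPoissonSolution ne Φs n φ)
    (hne : Differentiable ℝ ne) (hΦs : Differentiable ℝ Φs) (hn : Differentiable ℝ n)
    (hφ : Differentiable ℝ φ) {c : ℝ} {Λ : ℝ≥0} {I : Set ℝ}
    (hdec : UniformlyDecreasingOn ne c Λ I) {x : ℝ} (hx : 0 < x) (hs : Φs x ∈ I)
    (hst : Φs x + φ x ∈ I) (hΦs' : |deriv Φs x| ≤ 1) {k : ℕ} (hk : k ≤ 1) :
    deriv^[k] φ x ^ 2 + deriv^[k + 1] φ x ^ 2 + deriv^[k + 2] φ x ^ 2 ≤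
      (3 + 5 * Λ ^ 2) * ((φ x ^ 2 + deriv φ x ^ 2) +
        ∑ i ∈ Finset.range (k + 1), deriv^[i] n x ^ 2) := by
  have hsecond : deriv (deriv φ) x ^ 2 ≤ 2 * n x ^ 2 + 2 * Λ ^ 2 * φ x ^ 2 := by
    rw [h x hx]
    exact hdec.sq_sub_increment_le hs hst (n x)
  have hthird : deriv (deriv (deriv φ)) x ^ 2 ≤
      3 * (deriv n x ^ 2 + Λ ^ 2 * (φ x ^ 2 + deriv φ x ^ 2)) := by
    rw [h.deriv_deriv_deriv_eq hne hΦs hn hφ hx]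
    exact hdec.sq_sub_deriv_increment_le hs hst _ _ hΦs'
  have hφ_sq : 0 ≤ Λ ^ 2 * φ x ^ 2 := by positivity
  have hφ'_sq : 0 ≤ Λ ^ 2 * deriv φ x ^ 2 := by positivity
  have hn_sq : 0 ≤ Λ ^ 2 * n x ^ 2 := by positivity
  have hn'_sq : 0 ≤ Λ ^ 2 * deriv n x ^ 2 := by positivity
  interval_cases k
  · simp only [Function.iterate_succ, Function.iterate_zero, Function.comp_apply, id_eq,
      Finset.sum_range_succ, Finset.sum_range_zero]
    linarith [sq_nonneg (φ x), sq_nonneg (deriv φ x), sq_nonneg (n x)]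
  · simp only [Function.iterate_succ, Function.iterate_zero, Function.comp_apply, id_eq,
      Finset.sum_range_succ, Finset.sum_range_zero]
    linarith [sq_nonneg (φ x), sq_nonneg (deriv φ x), sq_nonneg (n x), sq_nonneg (deriv n x)]

lemma expWeightedLIntegral_le (h : IsPerturbedPoissonSolution ne Φs n φ) {β κ c : ℝ} (hκ : 0 < κ)
    (hquad : ∀ p q : ℝ, κ * (p ^ 2 + q ^ 2) ≤ c * p ^ 2 + β * (p * q) + q ^ 2)
    (hne : Differentiable ℝ ne) {Λ : ℝ≥0} {I : Set ℝ} (hdec : UniformlyDecreasingOn ne c Λ I)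
    (hΦs : Differentiable ℝ Φs) (hn : ContDiff ℝ 1 n) (hφ : ContDiff ℝ 2 φ) (hφ0 : φ 0 = 0)
    (hs : ∀ x > 0, Φs x ∈ I) (hst : ∀ x > 0, Φs x + φ x ∈ I)
    (hΦs' : ∀ x > 0, |deriv Φs x| ≤ 1)
    (hint : expWeightedLIntegral β
      (fun x => φ x ^ 2 + deriv φ x ^ 2 + deriv (deriv φ) x ^ 2) < ⊤) {k : ℕ} (hk : k ≤ 1) :
    expWeightedLIntegral β
        (fun x => deriv^[k] φ x ^ 2 + deriv^[k + 1] φ x ^ 2 + deriv^[k + 2] φ x ^ 2) ≤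
      ENNReal.ofReal ((3 + 5 * Λ ^ 2) * (κ⁻¹ ^ 2 + 1)) * expWeightedLIntegral β
        (fun x => ∑ i ∈ Finset.range (k + 1), deriv^[i] n x ^ 2) := by
  have hmeas : Measurable fun x => φ x ^ 2 + deriv φ x ^ 2 :=
    (hφ.continuous.measurable.pow_const 2).add ((measurable_deriv φ).pow_const 2)
  have henergy := expWeightedLIntegral_sq_add_deriv_sq_le hκ hquad hn.continuous.measurable
    hφ hφ0 hint fun x hx => by
      rw [h x hx]
      exact hdec.mul_sq_add_mul_le (hs x hx) (hst x hx) (n x)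
  have hn_le : expWeightedLIntegral β (fun x => n x ^ 2) ≤ expWeightedLIntegral β
      (fun x => ∑ i ∈ Finset.range (k + 1), deriv^[i] n x ^ 2) :=
    expWeightedLIntegral_mono fun x _ => Finset.single_le_sum
      (f := fun i => deriv^[i] n x ^ 2) (fun i _ => sq_nonneg _) (Finset.mem_range.2 k.succ_pos)
  exact expWeightedLIntegral_le_of_le_mul_add (by positivity) (by positivity) hmeas
    (fun x hx => h.sum_sq_iterate_deriv_le hne hΦs (hn.differentiable one_ne_zero)
      (hφ.differentiable two_ne_zero) hdec hx (hs x hx) (hst x hx) (hΦs' x hx) hk)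
    (henergy.trans (by gcongr))

end IsPerturbedPoissonSolution

theorem elliptic_weighted_estimate_general {ne : ℝ → ℝ} (hne : ContDiff ℝ 2 ne)
    (hanti : Antitone ne) {b : ℝ} (hb : b ^ 2 < -4 * deriv ne 0) :
    ∃ δ₀ > 0, ∃ C > 0, ∀ β : ℝ, |β| ≤ b → ∀ (Φb : ℝ) (Φs n φ : ℝ → ℝ),
      ContDiff ℝ 1 Φs → (∀ x ≥ 0, |Φs x| ≤ Φb ∧ |deriv Φs x| ≤ Φb) →
      ContDiff ℝ 1 n → IntegrableOn (fun x => n x ^ 2 + deriv n x ^ 2) (Ioi 0) →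
      ContDiff ℝ 2 φ → IsPerturbedPoissonSolution ne Φs n φ →
      φ 0 = 0 → Tendsto φ atTop (nhds 0) →
      expWeightedLIntegral β
        (fun x => φ x ^ 2 + deriv φ x ^ 2 + deriv (deriv φ) x ^ 2) < ⊤ →
      Φb + √(∫ x in Ioi (0 : ℝ), (n x ^ 2 + deriv n x ^ 2)) ≤ δ₀ →
      ∀ k : ℕ, k ≤ 1 →
        expWeightedLIntegral β
            (fun x => deriv^[k] φ x ^ 2 + deriv^[k + 1] φ x ^ 2 + deriv^[k + 2] φ x ^ 2) ≤
          ENNReal.ofReal C * expWeightedLIntegral β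
            (fun x => ∑ i ∈ Finset.range (k + 1), deriv^[i] n x ^ 2) := by
  obtain ⟨c, hbc, hc⟩ := exists_between (show b ^ 2 / 4 < -deriv ne 0 by linarith)
  have hc0 : 0 < c := (by positivity : 0 ≤ b ^ 2 / 4).trans_lt hbc
  obtain ⟨κ, hκ, hquad⟩ := exists_forall_mul_sq_add_sq_le (show b ^ 2 < 4 * c by linarith)
  obtain ⟨ρ, hρ, Λ, hdec⟩ := exists_uniformlyDecreasingOn_of_lt_neg_deriv hne hc
  obtain ⟨r, rfl⟩ : ∃ r, ρ = 2 * r := ⟨ρ / 2, by ring⟩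
  have hr : 0 < r := by linarith
  refine ⟨min 1 (min r (c * r / 2)), by positivity,
    (3 + 5 * Λ ^ 2) * (κ⁻¹ ^ 2 + 1), by positivity, ?_⟩
  intro β hβ Φb Φs n φ hΦs hΦsb hn hnint hφ heq hφ0 hlim hφint hsmall k hk
  have hΦb : 0 ≤ Φb := (abs_nonneg _).trans (hΦsb 0 le_rfl).1
  have hsqrt := sqrt_nonneg (∫ x in Ioi (0 : ℝ), (n x ^ 2 + deriv n x ^ 2))
  obtain ⟨hsmall_one, hsmall_r, hsmall_c⟩ := by simpa only [le_min_iff] using hsmall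
  have hΦsr : ∀ x > 0, |Φs x| ≤ r := fun x hx => (hΦsb x hx.le).1.trans (by linarith)
  have hn_lt : ∀ x > 0, |n x| < c * r := fun x hx =>
    (abs_le_sqrt_integral_Ioi_sq_add_deriv_sq hn hnint hx.le).trans_lt
      (by linarith [mul_pos hc0 hr])
  have hφr : ∀ x ≥ 0, |φ x| ≤ r :=
    heq.abs_le_of_antitone hanti hr hdec hφ.continuous hφ0 hlim hΦsr hn_lt
  have hs : ∀ x > 0, Φs x ∈ Metric.closedBall 0 (2 * r) := fun x hx =>
    mem_closedBall_zero_iff.2 ((hΦsr x hx).trans (by linarith))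
  have hst : ∀ x > 0, Φs x + φ x ∈ Metric.closedBall 0 (2 * r) := fun x hx =>
    mem_closedBall_zero_iff.2 ((abs_add_le _ _).trans (by linarith [hΦsr x hx, hφr x hx.le]))
  exact heq.expWeightedLIntegral_le hκ (hquad β hβ) (hne.differentiable two_ne_zero) hdec
    (hΦs.differentiable one_ne_zero) hn hφ hφ0 hs hst
    (fun x hx => (hΦsb x hx.le).2.trans (by linarith)) hφint hk

/-- exponentially weighted elliptic estimate
`‖e^{βx/2}∂_x^k φ‖_{H²} ≤ C Σ_{i≤k} ‖e^{βx/2}∂_x^i n‖_{L²}` (k = 0, 1), with `δ₀, C`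
independent of `β ∈ (0,1)`. -/
theorem elliptic_weighted_estimate
    (ne : ℝ → ℝ) (hne : ContDiff ℝ 2 ne) (hne0 : ne 0 = 1)
    (hne1 : deriv ne 0 = -1) (hne' : ∀ s, deriv ne s < 0) :
    ∃ δ₀ > 0, ∃ C > 0, ∀ β : ℝ, 0 < β → β < 1 →
      ∀ (Φb : ℝ) (Φs n φ : ℝ → ℝ),
      0 < Φb → ContDiff ℝ 1 Φs →
      (∀ x ≥ (0:ℝ), 0 ≤ Φs x ∧ Φs x ≤ Φb ∧ |deriv Φs x| ≤ Φb) →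
      ContDiff ℝ 1 n →
      (∫⁻ x in Set.Ioi (0:ℝ), ENNReal.ofReal
        (Real.exp (β*x) * ((n x)^2 + (deriv n x)^2))) < ⊤ →
      ContDiff ℝ 3 φ →
      (∀ x > (0:ℝ), deriv (deriv φ) x = n x - (ne (Φs x + φ x) - ne (Φs x))) →
      φ 0 = 0 → Tendsto φ atTop (nhds 0) →
      (∫⁻ x in Set.Ioi (0:ℝ), ENNReal.ofReal (Real.exp (β*x) *
        ((φ x)^2 + (deriv φ x)^2 + (deriv^[2] φ x)^2 + (deriv^[3] φ x)^2))) < ⊤ →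
      Φb + Real.sqrt (∫ x in Set.Ioi (0:ℝ), ((n x)^2 + (deriv n x)^2)) ≤ δ₀ →
      ∀ k : ℕ, k ≤ 1 →
        (∫⁻ x in Set.Ioi (0:ℝ), ENNReal.ofReal (Real.exp (β*x) *
            ((deriv^[k] φ x)^2 + (deriv^[k+1] φ x)^2 + (deriv^[k+2] φ x)^2)))
          ≤ ENNReal.ofReal C *
            ∫⁻ x in Set.Ioi (0:ℝ), ENNReal.ofReal (Real.exp (β*x) *
              (∑ i ∈ Finset.range (k+1), (deriv^[i] n x)^2)) := by
  have hanti : Antitone ne :=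
    antitone_of_deriv_nonpos (hne.differentiable two_ne_zero) fun s => (hne' s).le
  obtain ⟨δ₀, hδ₀, C, hC, hestimate⟩ :=
    elliptic_weighted_estimate_general hne hanti (b := 1) (by norm_num [hne1])
  refine ⟨δ₀, hδ₀, C, hC, ?_⟩
  intro β hβ0 hβ1 Φb Φs n φ _ hΦs hΦsb hn hnint hφ heq hφ0 hlim hφint
  have hmeas : Measurable fun x => n x ^ 2 + deriv n x ^ 2 :=
    (hn.continuous.measurable.pow_const 2).add ((measurable_deriv n).pow_const 2)
  exact hestimate β (abs_le.2 ⟨by linarith, hβ1.le⟩) Φb Φs n φ hΦs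
    (fun x hx => ⟨abs_le.2 ⟨by linarith [hΦsb x hx], (hΦsb x hx).2.1⟩, (hΦsb x hx).2.2⟩) hn
    (integrableOn_of_expWeightedLIntegral_lt_top hβ0.le hmeas (fun x => by positivity) hnint)
    (hφ.of_le (by norm_num)) heq hφ0 hlim
    ((expWeightedLIntegral_mono fun x _ => le_add_of_nonneg_right (sq_nonneg _)).trans_lt hφint)
end

section
/- Let r > 0, ε ∈ (0, r/2), γ > 0, T > 0, u∞ ∈ ℝ and θ∞ > 0. Let E_s : [0,∞) → ℝ be continuous with E_s(x) ≤ 0 for all x, and let E_p : [0,T] × [0,∞) → ℝ be continuous with |E_s(x) + E_p(t,x)| ≤ 1 and |E_p(t,x)| ≤ (ε γ / 2) e^{−γ t / 2} for all (t,x). Let g : [0,T] × [0,∞) × ℝ³ → ℝ be continuous with g(t,x,ξ) = 0 whenever ξ₁ ≥ −r. Suppose f : [0,T] × [0,∞) × ℝ³ → ℝ is C¹, satisfies the transport equation ∂_t f + ξ₁ ∂_x f + (E_s + E_p) ∂_{ξ₁} f + g = ((ξ₁ − u∞)/(2θ∞)) (E_s + E_p) f on (0,T) × (0,∞) × ℝ³,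 satisfies the boundary condition f(t,0,ξ) = 0 for all t and all ξ with ξ₁ > 0, satisfies f(0,x,ξ) = 0 whenever ξ₁ ≥ −(r − ε), and satisfies ∫₀^T ∫₀^∞ ∫_{ℝ³} (1 + |ξ₁|²)( |f|² + |∇_{t,x,ξ} f|² ) dξ dx dt < ∞ together with sup_{t∈[0,T]} ∫₀^∞ ∫_{ℝ³} (1 + |ξ₁|) |f(t,x,ξ)|² dξ dx < ∞. Then f(t,x,ξ) = 0 whenever ξ₁ ≥ −(r − 2ε). -/
open MeasureTheory Real Set Filter

/-!
A maximum principle replaces the flow of characteristics, which need not exist uniquely for a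
merely continuous field. Let `d = ∂_t + ξ₁ ∂_x + E ∂_{ξ₁}`. If `‖d F‖ ≤ C ‖F‖` on a compact set
that `-d` does not leave at any point where `F ≠ 0`, then at a maximum of
`‖F‖² exp (-(2 C + 1) t)` the derivative along `d` is both nonnegative and, unless `F = 0` there,
negative.

A characteristic can cross a barrier `ξ₁ = b t` upwards only where `b' ≤ E`, so for `E < b'` the
set `ξ₁ ≥ b t` is not left backwards in time. There `ξ₁` is bounded below, so that
`x` stays bounded backwards in time; hence so does `E`, and thus `ξ₁`, and the relevant set is
compact. The case `E ≤ b'` follows by tilting the barrier to `b t + δ t`. For the stability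
estimate, `E_s ≤ 0` leaves only the integrable force `(ε γ / 2) exp (-γ t / 2)`, under which the
barrier rises from `-(r - ε)` to at most `-(r - 2 ε)`.
-/

open scoped RealInnerProductSpace Topology

lemma eventually_le_nhdsGT_of_hasDerivAt {φ ψ : ℝ → ℝ} {φ' ψ' a : ℝ} (hφ : HasDerivAt φ φ' a)
    (hψ : HasDerivAt ψ ψ' a) (hle : φ a ≤ ψ a) (hlt : φ a = ψ a → φ' < ψ') :
    ∀ᶠ s in 𝓝[>] a, φ s ≤ ψ s := by
  rcases hle.lt_or_eq with h | h
  · exact ((hφ.continuousAt.eventually_lt hψ.continuousAt h).mono fun _ => le_of_lt).filter_mono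
      nhdsWithin_le_nhds
  · have hslope := (hasDerivWithinAt_iff_tendsto_slope' self_notMem_Ioi).1
      (hψ.sub hφ).hasDerivWithinAt
    filter_upwards [hslope.eventually_const_lt (sub_pos.2 (hlt h)), self_mem_nhdsWithin]
      with s hs (has : a < s)
    have hpos := (slope_pos_iff_of_le has.le).1 hs
    simp only [Pi.sub_apply, h, sub_self, sub_pos] at hpos
    exact hpos.le

lemma eqOn_Ici_of_eqOn_Ioi {X : Type*} [TopologicalSpace X] [T2Space X] {φ ψ : ℝ → X} {a : ℝ}
    (hφ : Continuous φ) (hψ : Continuous ψ) (h : EqOn φ ψ (Ioi a)) : EqOn φ ψ (Ici a) := by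
  simpa only [closure_Ioi] using h.closure hφ hψ

lemma exists_neg_lt_of_continuousOn {X : Type*} [TopologicalSpace X] {K : Set X} (hK : IsCompact K)
    {φ : X → ℝ} (hφ : ContinuousOn φ K) : ∃ N ≥ 0, ∀ x ∈ K, -N < φ x := by
  obtain ⟨m, hm⟩ := hK.bddBelow_image hφ
  refine ⟨|m| + 1, by positivity, fun x hx => ?_⟩
  linarith [hm (mem_image_of_mem φ hx), neg_abs_le m]

lemma eqOn_zero_of_norm_fderiv_le {P G : Type*} [NormedAddCommGroup P] [NormedSpace ℝ P]
    [NormedAddCommGroup G] [InnerProductSpace ℝ G] {K : Set P} (hK : IsCompact K) {F : P → G}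
    (hF : ∀ p ∈ K, DifferentiableAt ℝ F p) (τ : P →L[ℝ] ℝ) (d : P → P) (C : ℝ)
    (hτ : ∀ p ∈ K, τ (d p) = 1)
    (hC : ∀ p ∈ K, F p ≠ 0 → ‖fderiv ℝ F p (d p)‖ ≤ C * ‖F p‖)
    (hd : ∀ p ∈ K, F p ≠ 0 → -d p ∈ posTangentConeAt K p) :
    EqOn F 0 K := by
  intro q hq
  by_contra hFq
  set w : P → ℝ := fun p => ‖F p‖ ^ 2 * exp (-(2 * C + 1) * τ p)
  have hF_cont : ContinuousOn F K := fun p hp => (hF p hp).continuousAt.continuousWithinAt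
  obtain ⟨p, hp, hmax⟩ := hK.exists_isMaxOn ⟨q, hq⟩ (by fun_prop : ContinuousOn w K)
  have hFp : F p ≠ 0 := by
    intro h0
    have hwq : 0 < w q := mul_pos (pow_pos (norm_pos_iff.2 hFq) 2) (exp_pos _)
    have hwp : w p = 0 := by simp [w, h0]
    exact (hmax hq).not_gt (hwp ▸ hwq)
  have hw := (hF p hp).hasFDerivAt.norm_sq.mul
    ((τ.hasFDerivAt (x := p)).const_mul (-(2 * C + 1))).exp
  have hle := hmax.localize.hasFDerivWithinAt_nonpos hw.hasFDerivWithinAt (hd p hp hFp)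
  have hinner : ⟪F p, fderiv ℝ F p (d p)⟫ ≤ C * ‖F p‖ ^ 2 := calc
    ⟪F p, fderiv ℝ F p (d p)⟫ ≤ ‖F p‖ * ‖fderiv ℝ F p (d p)‖ := real_inner_le_norm _ _
    _ ≤ ‖F p‖ * (C * ‖F p‖) := by gcongr; exact hC p hp hFp
    _ = C * ‖F p‖ ^ 2 := by ring
  have hpos : 0 < exp (-(2 * C + 1) * τ p) *
      ((2 * C + 1) * ‖F p‖ ^ 2 - 2 * ⟪F p, fderiv ℝ F p (d p)⟫) := by
    have := pow_pos (norm_pos_iff.2 hFp) 2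
    exact mul_pos (exp_pos _) (by linarith)
  simp only [neg_mul, map_neg, add_apply, smul_apply, ContinuousLinearMap.comp_apply,
    innerSL_apply_apply, hτ p hp, smul_eq_mul, nsmul_eq_mul, Nat.cast_ofNat] at hle hpos
  linarith

/-- The direction `∂_t + ξ₁ ∂_x + E ∂_{ξ₁}` of the characteristics at the point `p = (t, x, ξ)`.
The velocity is split as `ξ = (ξ₁, ξ')`, with `ξ'` ranging over an arbitrary space `W`. -/
def transportField {W : Type*} [Zero W] (E : ℝ → ℝ → ℝ) (p : ℝ × ℝ × ℝ × W) : ℝ × ℝ × ℝ × W :=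
  (1, p.2.2.1, E p.1 p.2.1, 0)

lemma continuous_transportField {W : Type*} [TopologicalSpace W] [Zero W] {E : ℝ → ℝ → ℝ}
    (hE : Continuous ↿E) : Continuous (transportField (W := W) E) := by
  have : Continuous fun p : ℝ × ℝ × ℝ × W => E p.1 p.2.1 :=
    hE.comp (continuous_fst.prodMk continuous_snd.fst)
  unfold transportField
  fun_prop

/-- A region containing all points `(t, x, ξ)` above the barrier `b` that can be reached backwards
in time from `(t₀, x₀, v₀, w)` by curves in `x ≥ 0` with `ẋ ≥ -N`, `ξ̇₁ ≥ -M` and `ξ'` constant.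
It replaces the backward characteristic through that point. -/
def backwardRegion {W : Type*} (b : ℝ → ℝ) (N M t₀ x₀ v₀ : ℝ) (w : W) : Set (ℝ × ℝ × ℝ × W) :=
  {p | p.1 ∈ Icc 0 t₀ ∧ p.2.1 ∈ Icc 0 (x₀ + N * (t₀ - p.1)) ∧
    p.2.2.1 ∈ Icc (b p.1) (v₀ + M * (t₀ - p.1)) ∧ p.2.2.2 = w}

section BackwardRegion

variable {W : Type*} {b : ℝ → ℝ} {N M t₀ x₀ v₀ : ℝ} {w : W}

lemma isCompact_backwardRegion [TopologicalSpace W] [T2Space W] (hb : Continuous b) (hN : 0 ≤ N)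
    (hM : 0 ≤ M) : IsCompact (backwardRegion b N M t₀ x₀ v₀ w) := by
  obtain ⟨B, -, hB⟩ := exists_neg_lt_of_continuousOn isCompact_Icc (hb.continuousOn (s := Icc 0 t₀))
  have hclosed : IsClosed (backwardRegion b N M t₀ x₀ v₀ w) := by
    have hIcc {l m u : ℝ × ℝ × ℝ × W → ℝ} (hl : Continuous l) (hm : Continuous m)
        (hu : Continuous u) : IsClosed {p | m p ∈ Icc (l p) (u p)} :=
      (isClosed_le hl hm).inter (isClosed_le hm hu)
    refine (hIcc ?_ ?_ ?_).inter ((hIcc ?_ ?_ ?_).inter ((hIcc ?_ ?_ ?_).inter (isClosed_eq ?_ ?_)))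
    all_goals fun_prop
  have hbox : IsCompact
      (Icc 0 t₀ ×ˢ Icc 0 (x₀ + N * t₀) ×ˢ Icc (-B) (v₀ + M * t₀) ×ˢ ({w} : Set W)) :=
    isCompact_Icc.prod (isCompact_Icc.prod (isCompact_Icc.prod isCompact_singleton))
  refine hbox.of_isClosed_subset hclosed ?_
  rintro ⟨t, x, v, w'⟩ ⟨ht, hx, hv, hw⟩
  have hN_mul : N * (t₀ - t) ≤ N * t₀ := by gcongr; linarith [ht.1]
  have hM_mul : M * (t₀ - t) ≤ M * t₀ := by gcongr; linarith [ht.1]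
  exact ⟨ht, ⟨hx.1, hx.2.trans (by gcongr)⟩, ⟨(hB t ht).le.trans hv.1, hv.2.trans (by gcongr)⟩, hw⟩

variable [NormedAddCommGroup W] [NormedSpace ℝ W]

lemma neg_transportField_mem_posTangentConeAt {E : ℝ → ℝ → ℝ} {b' t x : ℝ} {ξ : ℝ × W}
    (hp : (t, x, ξ) ∈ backwardRegion b N M t₀ x₀ v₀ w) (hb : HasDerivAt b b' t) (ht : 0 < t)
    (hx : x = 0 → ξ.1 < 0) (hN : -N < ξ.1) (hM : -M < E t x) (hE : E t x < b') :
    -transportField E (t, x, ξ) ∈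
      posTangentConeAt (backwardRegion b N M t₀ x₀ v₀ w) (t, x, ξ) := by
  obtain ⟨⟨-, (htt₀ : t ≤ t₀)⟩, ⟨hx0, hxN⟩, ⟨hbv, hvM⟩, hw⟩ := hp
  have hline (y k : ℝ) : HasDerivAt (fun h : ℝ => y - h * k) (-k) 0 := by
    simpa using ((hasDerivAt_id (0 : ℝ)).mul_const k).const_sub y
  have hcone (y k : ℝ) : HasDerivAt (fun h : ℝ => y + k * (t₀ - (t - h))) k 0 := by
    simpa using ((((hasDerivAt_id (0 : ℝ)).const_sub t).const_sub t₀).const_mul k).const_add y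
  have hbarrier : HasDerivAt (fun h : ℝ => b (t - h)) (-b') 0 := by
    refine HasDerivAt.comp_const_sub t 0 ?_
    rwa [sub_zero]
  have hx_nonneg : ∀ᶠ h in 𝓝[>] (0 : ℝ), 0 ≤ x - h * ξ.1 :=
    eventually_le_nhdsGT_of_hasDerivAt (hasDerivAt_const 0 0) (hline x ξ.1) (by simpa using hx0)
      fun h => neg_pos.2 (hx (by simpa using h.symm))
  have hx_le : ∀ᶠ h in 𝓝[>] (0 : ℝ), x - h * ξ.1 ≤ x₀ + N * (t₀ - (t - h)) :=
    eventually_le_nhdsGT_of_hasDerivAt (hline x ξ.1) (hcone x₀ N) (by simpa using hxN)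
      fun _ => neg_lt.1 hN
  have hv_ge : ∀ᶠ h in 𝓝[>] (0 : ℝ), b (t - h) ≤ ξ.1 - h * E t x :=
    eventually_le_nhdsGT_of_hasDerivAt hbarrier (hline ξ.1 (E t x)) (by simpa using hbv)
      fun _ => neg_lt_neg hE
  have hv_le : ∀ᶠ h in 𝓝[>] (0 : ℝ), ξ.1 - h * E t x ≤ v₀ + M * (t₀ - (t - h)) :=
    eventually_le_nhdsGT_of_hasDerivAt (hline ξ.1 (E t x)) (hcone v₀ M) (by simpa using hvM)
      fun _ => neg_lt.1 hM
  refine mem_posTangentConeAt_of_frequently_mem (Eventually.frequently ?_)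
  filter_upwards [Ioo_mem_nhdsGT ht, hx_nonneg, hx_le, hv_ge, hv_le]
    with h hh hx_nonneg hx_le hv_ge hv_le
  have hpoint : (t, x, ξ) + h • -transportField E (t, x, ξ) =
      (t - h, x - h * ξ.1, ξ.1 - h * E t x, ξ.2) := by
    simp [Prod.ext_iff, transportField, sub_eq_add_neg]
  rw [hpoint]
  exact ⟨⟨by linarith [hh.2], by linarith [hh.1]⟩, ⟨hx_nonneg, hx_le⟩, ⟨hv_ge, hv_le⟩, hw⟩

end BackwardRegion

lemma le_above_barrier_of_le_interior {W : Type*} [TopologicalSpace W] {A B : ℝ × ℝ × ℝ × W → ℝ}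
    (hA : Continuous A) (hB : Continuous B) {b : ℝ → ℝ} (hb : Continuous b) {T : ℝ} (hT : 0 < T)
    (h : ∀ t ∈ Ioo 0 T, ∀ x > 0, ∀ ξ, b t < ξ.1 → A (t, x, ξ) ≤ B (t, x, ξ)) :
    ∀ t ∈ Icc 0 T, ∀ x ≥ 0, ∀ ξ, b t < ξ.1 → A (t, x, ξ) ≤ B (t, x, ξ) := by
  intro t ht x hx ξ hξ
  have hopen : IsOpen {p : ℝ × ℝ × ℝ × W | b p.1 < p.2.2.1} :=
    isOpen_lt (by fun_prop) (by fun_prop)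
  have hclosure : (t, x, ξ) ∈ closure (Ioo 0 T ×ˢ Ioi (0 : ℝ) ×ˢ (univ : Set (ℝ × W))) := by
    simpa only [closure_prod_eq, closure_Ioo hT.ne, closure_Ioi, closure_univ] using
      ⟨ht, hx, mem_univ ξ⟩
  refine closure_minimal ?_ (isClosed_le hA hB) (hopen.inter_closure ⟨hξ, hclosure⟩)
  rintro ⟨s, y, η⟩ ⟨hη, hs, hy, -⟩
  exact h s hs y hy η hη

section Barrier

variable {W G : Type*} [NormedAddCommGroup W] [NormedSpace ℝ W] [NormedAddCommGroup G]

lemma fderiv_apply_transportField [NormedSpace ℝ G] {f : ℝ → ℝ → ℝ × W → G} {t x : ℝ} {ξ : ℝ × W}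
    (hf : DifferentiableAt ℝ (fun p : ℝ × ℝ × ℝ × W => f p.1 p.2.1 p.2.2) (t, x, ξ))
    (E : ℝ → ℝ → ℝ) :
    fderiv ℝ (fun p : ℝ × ℝ × ℝ × W => f p.1 p.2.1 p.2.2) (t, x, ξ) (transportField E (t, x, ξ)) =
      deriv (fun s => f s x ξ) t + ξ.1 • deriv (fun y => f t y ξ) x
        + E t x • deriv (fun v => f t x (v, ξ.2)) ξ.1 := by
  have ht : HasDerivAt (fun s : ℝ => (s, x, ξ)) (1, 0, 0) t :=
    (hasDerivAt_id t).prodMk (hasDerivAt_const t (x, ξ))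
  have hx : HasDerivAt (fun y : ℝ => (t, y, ξ)) (0, 1, 0) x :=
    (hasDerivAt_const x t).prodMk ((hasDerivAt_id x).prodMk (hasDerivAt_const x ξ))
  have hv : HasDerivAt (fun v : ℝ => (t, x, (v, ξ.2))) (0, 0, (1, 0)) ξ.1 :=
    (hasDerivAt_const _ t).prodMk
      ((hasDerivAt_const _ x).prodMk ((hasDerivAt_id ξ.1).prodMk (hasDerivAt_const _ ξ.2)))
  have hft := (hf.hasFDerivAt.comp_hasDerivAt t ht).deriv
  have hfx := (hf.hasFDerivAt.comp_hasDerivAt x hx).deriv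
  have hfv := (HasFDerivAt.comp_hasDerivAt ξ.1 (by exact hf.hasFDerivAt) hv).deriv
  simp only [Function.comp_def] at hft hfx hfv
  rw [hft, hfx, hfv, ← map_smul, ← map_smul, ← map_add, ← map_add]
  simp [transportField]

variable [InnerProductSpace ℝ G]

lemma eq_zero_of_lt_deriv_barrier {T : ℝ} {F : ℝ × ℝ × ℝ × W → G} (hF : Differentiable ℝ F)
    {E : ℝ → ℝ → ℝ} (hE : Continuous ↿E) {b b' : ℝ → ℝ} (hb : ∀ t, HasDerivAt b (b' t) t)
    (hEb : ∀ t ∈ Icc 0 T, ∀ x ≥ 0, E t x < b' t)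
    {c : ℝ × ℝ × ℝ × W → ℝ} (hc : Continuous c)
    (hFE : ∀ t ∈ Ioc 0 T, ∀ x ≥ 0, ∀ ξ, b t ≤ ξ.1 →
      ‖fderiv ℝ F (t, x, ξ) (transportField E (t, x, ξ))‖ ≤ c (t, x, ξ) * ‖F (t, x, ξ)‖)
    (hbc : ∀ t ∈ Icc 0 T, ∀ ξ, b t ≤ ξ.1 → 0 ≤ ξ.1 → F (t, 0, ξ) = 0)
    (hic : ∀ x ≥ 0, ∀ ξ, b 0 ≤ ξ.1 → F (0, x, ξ) = 0) :
    ∀ t ∈ Icc 0 T, ∀ x ≥ 0, ∀ ξ, b t ≤ ξ.1 → F (t, x, ξ) = 0 := by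
  rintro t₀ ⟨ht₀, ht₀T⟩ x₀ hx₀ ⟨v₀, w⟩ hv₀
  have hb_cont : Continuous b := continuous_iff_continuousAt.2 fun t => (hb t).continuousAt
  obtain ⟨N, hN0, hN⟩ := exists_neg_lt_of_continuousOn (isCompact_Icc (a := 0) (b := t₀))
    hb_cont.continuousOn
  obtain ⟨M, hM0, hM⟩ := exists_neg_lt_of_continuousOn
    ((isCompact_Icc (a := 0) (b := t₀)).prod (isCompact_Icc (a := 0) (b := x₀ + N * t₀)))
    hE.continuousOn
  have hK : IsCompact (backwardRegion b N M t₀ x₀ v₀ w) := isCompact_backwardRegion hb_cont hN0 hM0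
  obtain ⟨C, hC⟩ := hK.exists_bound_of_continuousOn hc.continuousOn
  have ht_pos : ∀ p ∈ backwardRegion b N M t₀ x₀ v₀ w, F p ≠ 0 → p.1 ∈ Ioc 0 T := by
    rintro ⟨t, x, ξ⟩ ⟨ht, hx, hv, -⟩ hFp
    refine ⟨ht.1.lt_of_ne' ?_, ht.2.trans ht₀T⟩
    rintro rfl
    exact hFp (hic x hx.1 ξ hv.1)
  refine eqOn_zero_of_norm_fderiv_le hK (fun p _ => hF p) (ContinuousLinearMap.fst ℝ ℝ _)
    (transportField E) C (fun _ _ => rfl) ?_ ?_ ⟨⟨ht₀, le_rfl⟩, ⟨hx₀, ?_⟩, ⟨hv₀, ?_⟩, rfl⟩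
  · rintro ⟨t, x, ξ⟩ hp hFp
    calc ‖fderiv ℝ F (t, x, ξ) (transportField E (t, x, ξ))‖
        ≤ c (t, x, ξ) * ‖F (t, x, ξ)‖ :=
          hFE t (ht_pos _ hp hFp) x hp.2.1.1 ξ hp.2.2.1.1
      _ ≤ C * ‖F (t, x, ξ)‖ := by gcongr; exact (le_abs_self _).trans (hC _ hp)
  · rintro ⟨t, x, ξ⟩ hp hFp
    have ht := ht_pos _ hp hFp
    have ⟨ht₀', hx, hv, _⟩ := hp
    have hx_le : x ≤ x₀ + N * t₀ := hx.2.trans (by gcongr; linarith [ht.1])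
    refine neg_transportField_mem_posTangentConeAt hp (hb t) ht.1 ?_ ((hN t ht₀').trans_le hv.1)
      (hM (t, x) ⟨ht₀', hx.1, hx_le⟩) (hEb t (Ioc_subset_Icc_self ht) x hx.1)
    rintro rfl
    exact not_le.1 fun hv0 => hFp (hbc t (Ioc_subset_Icc_self ht) ξ hv.1 hv0)
  all_goals simp only [sub_self, mul_zero, add_zero, le_refl]

theorem support_propagation_stability_general {T : ℝ} (hT : 0 < T)
    {E : ℝ → ℝ → ℝ} (hE : Continuous ↿E) {b b' : ℝ → ℝ} (hb : ∀ t, HasDerivAt b (b' t) t)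
    (hEb : ∀ t ∈ Icc 0 T, ∀ x ≥ 0, E t x ≤ b' t)
    {f : ℝ → ℝ → ℝ × W → G}
    (hf : ContDiff ℝ 1 (fun p : ℝ × ℝ × ℝ × W => f p.1 p.2.1 p.2.2))
    {c : ℝ → ℝ → ℝ × W → ℝ} (hc : Continuous (fun p : ℝ × ℝ × ℝ × W => c p.1 p.2.1 p.2.2))
    (hfE : ∀ t ∈ Ioo 0 T, ∀ x > 0, ∀ ξ, b t < ξ.1 →
      ‖deriv (fun s => f s x ξ) t + ξ.1 • deriv (fun y => f t y ξ) x
        + E t x • deriv (fun v => f t x (v, ξ.2)) ξ.1‖ ≤ c t x ξ * ‖f t x ξ‖)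
    (hbc : ∀ t ∈ Icc 0 T, ∀ ξ, b t ≤ ξ.1 → 0 < ξ.1 → f t 0 ξ = 0)
    (hic : ∀ x ≥ 0, ∀ ξ, b 0 ≤ ξ.1 → f 0 x ξ = 0) :
    ∀ t ∈ Icc 0 T, ∀ x ≥ 0, ∀ ξ, b t ≤ ξ.1 → f t x ξ = 0 := by
  set F : ℝ × ℝ × ℝ × W → G := fun p => f p.1 p.2.1 p.2.2
  have hF : Differentiable ℝ F := hf.differentiable one_ne_zero
  have hF_cont : Continuous F := hf.continuous
  have hFE := le_above_barrier_of_le_interior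
    (A := fun p => ‖fderiv ℝ F p (transportField E p)‖) (B := fun p => c p.1 p.2.1 p.2.2 * ‖F p‖)
    ((hf.continuous_fderiv one_ne_zero).clm_apply (continuous_transportField hE)).norm
    (hc.mul hF_cont.norm) (continuous_iff_continuousAt.2 fun t => (hb t).continuousAt) hT
    fun t ht x hx ξ hξ => by
      simpa only [F, fderiv_apply_transportField (hF (t, x, ξ))] using hfE t ht x hx ξ hξ
  have hbc_closed : ∀ t ∈ Icc 0 T, ∀ ξ, b t ≤ ξ.1 → 0 ≤ ξ.1 → F (t, 0, ξ) = 0 := by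
    intro t ht ξ hbξ hξ
    exact eqOn_Ici_of_eqOn_Ioi (φ := fun v => F (t, 0, v, ξ.2)) (ψ := 0) (by fun_prop)
      continuous_zero (fun v hv => hbc t ht (v, ξ.2) (hbξ.trans (le_of_lt hv)) (hξ.trans_lt hv))
      self_mem_Ici
  intro t ht x hx ξ hξ
  have htilted : EqOn (fun δ => F (t, x, ξ.1 + δ * t, ξ.2)) 0 (Ioi 0) := by
    intro δ (hδ : 0 < δ)
    have hle (s : ℝ) (hs : s ∈ Icc 0 T) : b s ≤ b s + δ * s :=
      le_add_of_nonneg_right (mul_nonneg hδ.le hs.1)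
    refine eq_zero_of_lt_deriv_barrier (b := fun s => b s + δ * s) (b' := fun s => b' s + δ) hF hE
      (fun s => ?_) (fun s hs y hy => (hEb s hs y hy).trans_lt (lt_add_of_pos_right _ hδ)) hc
      (fun s hs y hy η hη => hFE s (Ioc_subset_Icc_self hs) y hy η ?_)
      (fun s hs η hη => hbc_closed s hs η ((hle s hs).trans hη))
      (fun y hy η hη => hic y hy η (by simpa using hη)) t ht x hx _ (add_le_add_left hξ _)
    · simpa using! (hb s).add ((hasDerivAt_id s).const_mul δ)
    · exact (lt_add_of_pos_right _ (mul_pos hδ hs.1)).trans_le hη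
  simpa [F] using eqOn_Ici_of_eqOn_Ioi (by fun_prop) continuous_zero htilted self_mem_Ici

end Barrier

/-- The barrier for the stability estimate: it starts at `-(r - ε)`, rises at the speed
`(ε γ / 2) exp (-γ t / 2)` that bounds the perturbed field, and stays below `-(r - 2 ε)`. -/
noncomputable def stabilityBarrier (r ε γ t : ℝ) : ℝ :=
  -(r - 2 * ε) - ε * exp (-γ * t / 2)

section StabilityBarrier

variable (r ε γ : ℝ)

lemma hasDerivAt_stabilityBarrier (t : ℝ) :
    HasDerivAt (stabilityBarrier r ε γ) (ε * γ / 2 * exp (-γ * t / 2)) t := by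
  have hexp : HasDerivAt (fun s => exp (-γ * s / 2)) (exp (-γ * t / 2) * (-γ * 1 / 2)) t :=
    (((hasDerivAt_id t).const_mul (-γ)).div_const 2).exp
  exact ((hexp.const_mul ε).const_sub _).congr_deriv (by ring)

lemma stabilityBarrier_zero : stabilityBarrier r ε γ 0 = -(r - ε) := by
  simp only [stabilityBarrier, mul_zero, zero_div, exp_zero]
  ring

variable {ε γ}

lemma stabilityBarrier_le (hε : 0 ≤ ε) (t : ℝ) :
    stabilityBarrier r ε γ t ≤ -(r - 2 * ε) :=
  sub_le_self _ (mul_nonneg hε (exp_pos _).le)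

lemma neg_sub_le_stabilityBarrier {t : ℝ} (hε : 0 ≤ ε) (hγ : 0 ≤ γ) (ht : 0 ≤ t) :
    -(r - ε) ≤ stabilityBarrier r ε γ t := by
  have hexp : exp (-γ * t / 2) ≤ 1 := exp_le_one_iff.2 (by nlinarith)
  have := mul_le_of_le_one_right hε hexp
  simp only [stabilityBarrier]
  linarith

end StabilityBarrier

/-- support propagation for the transport equation
`∂_t f + ξ₁∂_x f + (E_s+E_p)∂_{ξ₁}f + g = ((ξ₁−u∞)/(2θ∞))(E_s+E_p) f` on the half-line
with absorbing boundary condition: if the initial data vanish for `ξ₁ ≥ −(r−ε)` and the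
source `g` vanishes for `ξ₁ ≥ −r`, then the solution vanishes for `ξ₁ ≥ −(r−2ε)`. -/
theorem support_propagation_stability
    (r ε γ T u θ : ℝ) (hr : 0 < r) (hε : 0 < ε) (hε2 : ε < r/2)
    (hγ : 0 < γ) (hT : 0 < T) (hθ : 0 < θ)
    (Es : ℝ → ℝ) (hEsc : Continuous Es) (hEs0 : ∀ x, Es x ≤ 0)
    (Ep : ℝ → ℝ → ℝ) (hEpc : Continuous (fun p : ℝ × ℝ => Ep p.1 p.2))
    (hE1 : ∀ t ∈ Set.Icc 0 T, ∀ x ≥ (0:ℝ), |Es x + Ep t x| ≤ 1)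
    (hE2 : ∀ t ∈ Set.Icc 0 T, ∀ x ≥ (0:ℝ), |Ep t x| ≤ ε * γ / 2 * Real.exp (-γ * t / 2))
    (g : ℝ → ℝ → ℝ × ℝ × ℝ → ℝ)
    (hgc : Continuous (fun p : ℝ × ℝ × (ℝ × ℝ × ℝ) => g p.1 p.2.1 p.2.2))
    (hg0 : ∀ t x, ∀ ξ : ℝ × ℝ × ℝ, -r ≤ ξ.1 → g t x ξ = 0)
    (f : ℝ → ℝ → ℝ × ℝ × ℝ → ℝ)
    (hf : ContDiff ℝ 1 (fun p : ℝ × ℝ × (ℝ × ℝ × ℝ) => f p.1 p.2.1 p.2.2))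
    (heq : ∀ t ∈ Set.Ioo 0 T, ∀ x > (0:ℝ), ∀ ξ : ℝ × ℝ × ℝ,
      deriv (fun s => f s x ξ) t + ξ.1 * deriv (fun y => f t y ξ) x
        + (Es x + Ep t x) * deriv (fun v => f t x (v, ξ.2)) ξ.1 + g t x ξ
        = ((ξ.1 - u) / (2*θ)) * (Es x + Ep t x) * f t x ξ)
    (hbc : ∀ t ∈ Set.Icc 0 T, ∀ ξ : ℝ × ℝ × ℝ, 0 < ξ.1 → f t 0 ξ = 0)
    (hic : ∀ x ≥ (0:ℝ), ∀ ξ : ℝ × ℝ × ℝ, -(r - ε) ≤ ξ.1 → f 0 x ξ = 0)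
    (hint : (∫⁻ t in Set.Ioc 0 T, ∫⁻ x in Set.Ioi 0, ∫⁻ ξ : ℝ × ℝ × ℝ,
        ENNReal.ofReal ((1 + ξ.1^2) * ((f t x ξ)^2 +
          ‖fderiv ℝ (fun p : ℝ × ℝ × (ℝ × ℝ × ℝ) => f p.1 p.2.1 p.2.2) (t, x, ξ)‖^2))) < ⊤)
    (hsup : ∃ B : ℝ, ∀ t ∈ Set.Icc 0 T,
      (∫⁻ x in Set.Ioi 0, ∫⁻ ξ : ℝ × ℝ × ℝ,
        ENNReal.ofReal ((1 + |ξ.1|) * (f t x ξ)^2)) ≤ ENNReal.ofReal B) :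
    ∀ t ∈ Set.Icc 0 T, ∀ x ≥ (0:ℝ), ∀ ξ : ℝ × ℝ × ℝ, -(r - 2*ε) ≤ ξ.1 → f t x ξ = 0 := by
  intro t ht x hx ξ hξ
  refine support_propagation_stability_general (b := stabilityBarrier r ε γ)
    (E := fun t x => Es x + Ep t x) (c := fun t x ξ => |(ξ.1 - u) / (2 * θ) * (Es x + Ep t x)|)
    hT (by fun_prop) (hasDerivAt_stabilityBarrier r ε γ) (fun t ht x hx => ?_) hf (by fun_prop)
    (fun t ht x hx ξ hξ => ?_) (fun t ht ξ _ => hbc t ht ξ)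
    (fun x hx ξ hξ => hic x hx ξ (stabilityBarrier_zero r ε γ ▸ hξ)) t ht x hx ξ
    ((stabilityBarrier_le r hε.le t).trans hξ)
  · linarith [hEs0 x, (abs_le.1 (hE2 t ht x hx)).2]
  · have hg : g t x ξ = 0 :=
      hg0 t x ξ (by linarith [neg_sub_le_stabilityBarrier r hε.le hγ.le ht.1.le])
    rw [norm_eq_abs, norm_eq_abs, ← abs_mul, ← heq t ht x hx ξ, hg, add_zero, smul_eq_mul,
      smul_eq_mul]
end

section
/- Let T̂ > 0, R ∈ ℝ, u∞ ∈ ℝ and θ∞ > 0. Let E : [0,T̂] × [0,∞) → ℝ be continuous with ĉ₀ := sup |E| < ∞. Let F̂ : [0,T̂] × [0,∞) × ℝ³ → ℝ be continuous with F̂(t,x,ξ) = 0 whenever ξ₁ > R. Suppose f : [0,T̂] × [0,∞) × ℝ³ → ℝ is C¹, satisfies ∂_t f + ξ₁ ∂_x f + E ∂_{ξ₁} f − ((ξ₁ − u∞)/(2θ∞)) E f = F̂ on (0,T̂) × (0,∞) × ℝ³, satisfies the boundary condition f(t,0,ξ) = 0 for all t and all ξ with ξ₁ > 0, satisfies f(0,x,ξ)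 = 0 whenever ξ₁ > R, and satisfies sup_{t ∈ [0,T̂]} ∫₀^∞ ∫_{ℝ³} (1 + |ξ₁|)( |f(t,x,ξ)|² + |∇_{t,x,ξ} f(t,x,ξ)|² ) dξ dx < ∞. Then f(t,x,ξ) = 0 whenever ξ₁ > R + ĉ₀ t. -/
open MeasureTheory Real Set Filter

/-!
Let `K` be the backward domain of dependence of a point `(t₀, x₀, v₀)` with `v₀ > R + ĉ₀ t₀`: on it
the velocity `v = ξ₁` exceeds `R` and is bounded, so `K` is compact and meets only the region where
the data vanish. There, with `A = ĉ₀ |v - u∞| / (2 θ∞)`, the equation implies the differential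
inequality `|∂_t f + v ∂_x f| ≤ ĉ₀ |∂_v f| + A |f|`, which no longer mentions `E` and, being closed,
extends to the boundary of the phase space by continuity. At a maximum point over `K` of
`exp (-λ t) f ^ 2` with `f ≠ 0`, choosing the force `e ∈ {ĉ₀, -ĉ₀}` with `e f ∂_v f ≤ 0` makes this
function increase strictly backwards along `(1, v, e)` once `λ > 2 sup_K A`. The backward direction
stays in `K`, because the data exclude the initial time and the incoming boundary; hence `f = 0`
on `K`.
-/

open scoped Topology

lemma eq_zero_of_forall_exists_backward_direction {V : Type*} [NormedAddCommGroup V]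
    [NormedSpace ℝ V] {K : Set (ℝ × V)} (hK : IsCompact K) {G A : ℝ × V → ℝ}
    (hG : ∀ p ∈ K, DifferentiableAt ℝ G p) (hA : BddAbove (A '' K))
    (hback : ∀ p ∈ K, G p ≠ 0 → ∃ b : V,
      -(1, b) ∈ posTangentConeAt K p ∧ G p * fderiv ℝ G p (1, b) ≤ A p * G p ^ 2) :
    ∀ p ∈ K, G p = 0 := by
  obtain ⟨C, hC⟩ := hA
  intro q hq
  let g : ℝ × V → ℝ := fun p => exp (-(2 * C + 1) * p.1) * G p ^ 2
  have hg : ∀ p ∈ K, HasFDerivAt g (exp (-(2 * C + 1) * p.1) • (2 * G p) • fderiv ℝ G p +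
      G p ^ 2 • exp (-(2 * C + 1) * p.1) • -(2 * C + 1) • ContinuousLinearMap.fst ℝ ℝ V) p := by
    intro p hp
    refine ((hasFDerivAt_fst.const_mul (-(2 * C + 1))).exp.mul
      ((hG p hp).hasFDerivAt.pow 2)).congr_fderiv ?_
    simp
  obtain ⟨p, hp, hmax⟩ := hK.exists_isMaxOn ⟨q, hq⟩
    fun p hp => (hg p hp).continuousAt.continuousWithinAt
  have hGp : G p = 0 := by
    by_contra hne
    obtain ⟨b, hb, hle⟩ := hback p hp hne
    have hnonpos := hmax.localize.hasFDerivWithinAt_nonpos (hg p hp).hasFDerivWithinAt hb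
    have hderiv : exp (-(2 * C + 1) * p.1) *
        ((2 * C + 1) * G p ^ 2 - 2 * (G p * fderiv ℝ G p (1, b))) ≤ 0 := by
      convert hnonpos using 1
      simp only [map_neg, add_apply, smul_apply, ContinuousLinearMap.coe_fst', smul_eq_mul]
      ring
    have hAC : A p * G p ^ 2 ≤ C * G p ^ 2 := by gcongr; exact hC (mem_image_of_mem A hp)
    have hsq : 0 < G p ^ 2 := by positivity
    exact hderiv.not_gt (mul_pos (exp_pos _) (by linarith))
  have hgq : exp (-(2 * C + 1) * q.1) * G q ^ 2 ≤ 0 := by simpa [g, hGp] using hmax hq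
  exact pow_eq_zero_iff two_ne_zero |>.1
    ((nonpos_of_mul_nonpos_right hgq (exp_pos _)).antisymm (sq_nonneg _))

lemma exists_abs_le_mul_add_mul_le {g d₀ d₁ c A : ℝ} (hc : 0 ≤ c)
    (h : |d₀| ≤ c * |d₁| + A * |g|) : ∃ e, |e| ≤ c ∧ g * (d₀ + e * d₁) ≤ A * g ^ 2 := by
  have hworst : ∃ e, |e| ≤ c ∧ e * (g * d₁) = -(c * |g * d₁|) := by
    rcases abs_cases (g * d₁) with ⟨habs, -⟩ | ⟨habs, -⟩
    · exact ⟨-c, by rw [abs_neg, abs_of_nonneg hc], by rw [habs]; ring⟩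
    · exact ⟨c, (abs_of_nonneg hc).le, by rw [habs]; ring⟩
  obtain ⟨e, he, heq⟩ := hworst
  refine ⟨e, he, ?_⟩
  calc g * (d₀ + e * d₁) = g * d₀ - c * |g * d₁| := by linear_combination heq
    _ ≤ |g| * |d₀| - c * |g * d₁| := by rw [← abs_mul]; gcongr; exact le_abs_self _
    _ ≤ |g| * (c * |d₁| + A * |g|) - c * |g * d₁| := by gcongr
    _ = A * g ^ 2 := by rw [abs_mul, ← sq_abs g]; ring

lemma abs_le_of_add_mul_sub_eq_zero {g d₀ d₁ c e κ : ℝ} (he : |e| ≤ c)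
    (h : d₀ + e * d₁ - κ * e * g = 0) : |d₀| ≤ c * |d₁| + c * |κ| * |g| :=
  calc |d₀| = |e * (κ * g - d₁)| := by congr 1; linear_combination h
    _ ≤ c * (|κ * g| + |d₁|) := by
      rw [abs_mul]
      exact mul_le_mul he (abs_sub _ _) (abs_nonneg _) ((abs_nonneg e).trans he)
    _ = c * |d₁| + c * |κ| * |g| := by rw [abs_mul]; ring

lemma fderiv_apply_eq_add_deriv {𝕜 F : Type*} [NontriviallyNormedField 𝕜] [NormedAddCommGroup F]
    [NormedSpace 𝕜 F] {G : 𝕜 × 𝕜 × 𝕜 → F} {t x v : 𝕜} (hG : DifferentiableAt 𝕜 G (t, x, v))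
    (α β γ : 𝕜) :
    fderiv 𝕜 G (t, x, v) (α, β, γ) = α • deriv (fun s => G (s, x, v)) t
      + β • deriv (fun y => G (t, y, v)) x + γ • deriv (fun w => G (t, x, w)) v := by
  have ht : HasDerivAt (fun s => G (s, x, v)) (fderiv 𝕜 G (t, x, v) (1, 0, 0)) t :=
    hG.hasFDerivAt.comp_hasDerivAt t ((hasDerivAt_id t).prodMk (hasDerivAt_const t (x, v)))
  have hx : HasDerivAt (fun y => G (t, y, v)) (fderiv 𝕜 G (t, x, v) (0, 1, 0)) x :=
    hG.hasFDerivAt.comp_hasDerivAt x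
      ((hasDerivAt_const x t).prodMk ((hasDerivAt_id x).prodMk (hasDerivAt_const x v)))
  have hv : HasDerivAt (fun w => G (t, x, w)) (fderiv 𝕜 G (t, x, v) (0, 0, 1)) v :=
    hG.hasFDerivAt.comp_hasDerivAt v
      ((hasDerivAt_const v t).prodMk ((hasDerivAt_const v x).prodMk (hasDerivAt_id v)))
  rw [ht.deriv, hx.deriv, hv.deriv, ← map_smul, ← map_smul, ← map_smul, ← map_add, ← map_add]
  simp

/-- A compact domain of dependence of the phase-space point `(t₀, x₀, v₀)` on the half-line `x ≥ 0`
for characteristics `x' = v`, `|v'| ≤ c`. The propagation speed allowed in `x` is `|v₀| + c * t₀`,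
which bounds every velocity occurring in the set. -/
def dependenceCone (c t₀ x₀ v₀ : ℝ) : Set (ℝ × ℝ × ℝ) :=
  {p | p.1 ∈ Icc 0 t₀ ∧ 0 ≤ p.2.1 ∧ |p.2.1 - x₀| ≤ (|v₀| + c * t₀) * (t₀ - p.1) ∧
    |p.2.2 - v₀| ≤ c * (t₀ - p.1)}

section DependenceCone

variable {c t₀ x₀ v₀ t x v : ℝ}

lemma apex_mem_dependenceCone (ht₀ : 0 ≤ t₀) (hx₀ : 0 ≤ x₀) :
    (t₀, x₀, v₀) ∈ dependenceCone c t₀ x₀ v₀ :=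
  ⟨⟨ht₀, le_rfl⟩, hx₀, by simp, by simp⟩

lemma add_mul_lt_of_mem_dependenceCone {R : ℝ} (hR : R + c * t₀ < v₀)
    (hp : (t, x, v) ∈ dependenceCone c t₀ x₀ v₀) : R + c * t < v := by
  obtain ⟨-, -, -, hv⟩ := hp
  dsimp only at hv
  linarith [(abs_le.1 hv).1]

lemma abs_velocity_le_of_mem_dependenceCone (hc : 0 ≤ c)
    (hp : (t, x, v) ∈ dependenceCone c t₀ x₀ v₀) : |v| ≤ |v₀| + c * t₀ := by
  obtain ⟨⟨ht, -⟩, -, -, hv⟩ := hp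
  dsimp only at ht hv
  linarith [abs_sub_abs_le_abs_sub v v₀, mul_nonneg hc ht]

lemma isCompact_dependenceCone (c t₀ x₀ v₀ : ℝ) : IsCompact (dependenceCone c t₀ x₀ v₀) := by
  have hclosed : IsClosed (dependenceCone c t₀ x₀ v₀) := by
    have hx : IsClosed {p : ℝ × ℝ × ℝ | |p.2.1 - x₀| ≤ (|v₀| + c * t₀) * (t₀ - p.1)} :=
      isClosed_le (by fun_prop) (by fun_prop)
    have hv : IsClosed {p : ℝ × ℝ × ℝ | |p.2.2 - v₀| ≤ c * (t₀ - p.1)} :=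
      isClosed_le (by fun_prop) (by fun_prop)
    exact (isClosed_Icc.preimage continuous_fst).inter
      ((isClosed_Ici.preimage (continuous_fst.comp continuous_snd)).inter (hx.inter hv))
  have hbounded : dependenceCone c t₀ x₀ v₀ ⊆ Icc 0 t₀ ×ˢ
      Metric.closedBall x₀ (|(|v₀| + c * t₀)| * t₀) ×ˢ Metric.closedBall v₀ (|c| * t₀) := by
    have hle : ∀ a, ∀ s ∈ Icc 0 t₀, a * (t₀ - s) ≤ |a| * t₀ := fun a s hs =>
      mul_le_mul (le_abs_self a) (by linarith [hs.1]) (by linarith [hs.2]) (abs_nonneg a)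
    rintro ⟨t, x, v⟩ ⟨ht, -, hx, hv⟩
    exact ⟨ht, hx.trans (hle _ t ht), hv.trans (hle _ t ht)⟩
  exact (isCompact_Icc.prod ((isCompact_closedBall _ _).prod
    (isCompact_closedBall _ _))).of_isClosed_subset hclosed hbounded

lemma abs_backward_sub_le {y y₀ w M h : ℝ} (hw : |w| ≤ M) (hy : |y - y₀| ≤ M * (t₀ - t))
    (hh : 0 ≤ h) : |y - h * w - y₀| ≤ M * (t₀ - (t - h)) :=
  calc |y - h * w - y₀| = |(y - y₀) - h * w| := by ring_nf
    _ ≤ |y - y₀| + h * |w| := (abs_sub _ _).trans_eq (by rw [abs_mul, abs_of_nonneg hh])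
    _ ≤ M * (t₀ - t) + h * M := by gcongr
    _ = M * (t₀ - (t - h)) := by ring

lemma neg_mem_posTangentConeAt_dependenceCone {e : ℝ}
    (hp : (t, x, v) ∈ dependenceCone c t₀ x₀ v₀) (ht : t ≠ 0) (hx : x = 0 → v < 0)
    (he : |e| ≤ c) :
    -(1, v, e) ∈ posTangentConeAt (dependenceCone c t₀ x₀ v₀) (t, x, v) := by
  have hv := abs_velocity_le_of_mem_dependenceCone ((abs_nonneg e).trans he) hp
  obtain ⟨⟨ht_nonneg, ht_le⟩, hx_nonneg, hxx₀, hvv₀⟩ := hp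
  have ht_pos : 0 < t := ht_nonneg.lt_of_ne' ht
  have hx_back : ∀ᶠ h in 𝓝[>] (0 : ℝ), 0 ≤ x - h * v := by
    rcases hx_nonneg.eq_or_lt' with h0 | h0
    · filter_upwards [self_mem_nhdsWithin] with h hh
      simpa [show x = 0 from h0] using (mul_neg_of_pos_of_neg hh (hx h0)).le
    · have hcont : Continuous fun h : ℝ => x - h * v := by fun_prop
      exact nhdsWithin_le_nhds (hcont.continuousAt.eventually_const_le (by simpa using h0))
  refine mem_posTangentConeAt_of_frequently_mem (Eventually.frequently ?_)
  filter_upwards [hx_back, self_mem_nhdsWithin, nhdsWithin_le_nhds (Iio_mem_nhds ht_pos)]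
    with h hxh hh hht
  have hpoint : (t, x, v) + h • -((1 : ℝ), v, e) = (t - h, x - h * v, v - h * e) := by
    simp [sub_eq_add_neg]
  rw [hpoint]
  exact ⟨⟨sub_nonneg.2 (le_of_lt hht), (sub_le_self t (le_of_lt hh)).trans ht_le⟩, hxh,
    abs_backward_sub_le hv hxx₀ (le_of_lt hh), abs_backward_sub_le he hvv₀ (le_of_lt hh)⟩

end DependenceCone

/-- The differential inequality `|∂_t G + v ∂_x G| ≤ c |∂_v G| + A |G|` at `p = (t, x, v)`.
It stands for the equation `∂_t G + v ∂_x G + e ∂_v G = a G` with unspecified coefficients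
`|e| ≤ c` and `|a| ≤ A`; unlike the equation it is preserved under limits in `p` even when `e` and
`a` are discontinuous. -/
def TransportInequalityAt (c : ℝ) (A G : ℝ × ℝ × ℝ → ℝ) (p : ℝ × ℝ × ℝ) : Prop :=
  |fderiv ℝ G p (1, p.2.2, 0)| ≤ c * |fderiv ℝ G p (0, 0, 1)| + A p * |G p|

section TransportInequality

variable {T R c : ℝ} {G A : ℝ × ℝ × ℝ → ℝ}

lemma isClosed_setOf_transportInequalityAt (c : ℝ) (hG : ContDiff ℝ 1 G) (hA : Continuous A) :
    IsClosed {p | TransportInequalityAt c A G p} := by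
  have hdG : Continuous (fderiv ℝ G) := hG.continuous_fderiv one_ne_zero
  exact isClosed_le (hdG.clm_apply (by fun_prop)).abs
    (((hdG.clm_apply continuous_const).abs.const_mul c).add (hA.mul hG.continuous.abs))

lemma TransportInequalityAt.of_interior (hT : 0 < T) (hG : ContDiff ℝ 1 G) (hA : Continuous A)
    (hle : ∀ t ∈ Ioo 0 T, ∀ x > 0, ∀ v > R, TransportInequalityAt c A G (t, x, v))
    {t x v : ℝ} (ht : t ∈ Icc 0 T) (hx : 0 ≤ x) (hv : R ≤ v) :
    TransportInequalityAt c A G (t, x, v) := by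
  have hsub : Ioo 0 T ×ˢ Ioi 0 ×ˢ Ioi R ⊆ {p | TransportInequalityAt c A G p} :=
    fun p hp => hle p.1 hp.1 p.2.1 hp.2.1 p.2.2 hp.2.2
  have hcl : (t, x, v) ∈ closure (Ioo 0 T ×ˢ Ioi 0 ×ˢ Ioi R) := by
    rw [closure_prod_eq, closure_prod_eq, closure_Ioo hT.ne, closure_Ioi, closure_Ioi]
    exact ⟨ht, hx, hv⟩
  exact closure_minimal hsub (isClosed_setOf_transportInequalityAt c hG hA) hcl

theorem eq_zero_of_transportInequalityAt (hT : 0 < T) (hc : 0 ≤ c) (hG : ContDiff ℝ 1 G)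
    (hA : Continuous A)
    (hle : ∀ t ∈ Ioo 0 T, ∀ x > 0, ∀ v > R, TransportInequalityAt c A G (t, x, v))
    (hbc : ∀ t ∈ Icc 0 T, ∀ v > 0, G (t, 0, v) = 0) (hic : ∀ x ≥ 0, ∀ v > R, G (0, x, v) = 0) :
    ∀ t ∈ Icc 0 T, ∀ x ≥ 0, ∀ v, R + c * t < v → G (t, x, v) = 0 := by
  intro t₀ ht₀ x₀ hx₀ v₀ hv₀
  have hK := isCompact_dependenceCone c t₀ x₀ v₀
  have hbc' : ∀ t ∈ Icc 0 T, ∀ v ≥ 0, G (t, 0, v) = 0 := by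
    intro t ht v hv
    have heqOn : EqOn (fun w => G (t, 0, w)) (fun _ => 0) (Ioi 0) := hbc t ht
    have hGc : Continuous G := hG.continuous
    exact heqOn.closure (by fun_prop) continuous_const (by rwa [closure_Ioi])
  refine eq_zero_of_forall_exists_backward_direction hK
    (fun p _ => hG.differentiable one_ne_zero p) (hK.bddAbove_image hA.continuousOn) ?_
    (t₀, x₀, v₀) (apex_mem_dependenceCone ht₀.1 hx₀)
  rintro ⟨t, x, v⟩ hp hne
  have ht : t ∈ Icc 0 T := ⟨hp.1.1, hp.1.2.trans ht₀.2⟩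
  have hx : 0 ≤ x := hp.2.1
  have hv : R < v := by
    linarith [add_mul_lt_of_mem_dependenceCone hv₀ hp, mul_nonneg hc ht.1]
  have ht_ne : t ≠ 0 := by
    rintro rfl
    exact hne (hic x hx v hv)
  have hv_neg : x = 0 → v < 0 := by
    rintro rfl
    by_contra! hv_nonneg
    exact hne (hbc' t ht v hv_nonneg)
  obtain ⟨e, he, hdecay⟩ := exists_abs_le_mul_add_mul_le hc
    (.of_interior hT hG hA hle ht hx hv.le : TransportInequalityAt c A G (t, x, v))
  refine ⟨(v, e), neg_mem_posTangentConeAt_dependenceCone hp ht_ne hv_neg he, ?_⟩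
  have hsplit : ((1 : ℝ), v, e) = (1, v, 0) + e • (0, 0, 1) := by simp
  rwa [hsplit, map_add, map_smul, smul_eq_mul]

end TransportInequality

theorem velocity_support_propagation_general {W : Type*} {T R c₀ : ℝ} (hT : 0 < T)
    {E : ℝ → ℝ → ℝ} (hE : ∀ t ∈ Icc 0 T, ∀ x ≥ 0, |E t x| ≤ c₀)
    {κ : ℝ × W → ℝ} (hκ : ∀ η, Continuous fun v => κ (v, η))
    {F : ℝ → ℝ → ℝ × W → ℝ} (hF : ∀ t ∈ Icc 0 T, ∀ x ≥ 0, ∀ ξ : ℝ × W, R < ξ.1 → F t x ξ = 0)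
    {f : ℝ → ℝ → ℝ × W → ℝ}
    (hf : ∀ η, ContDiff ℝ 1 fun p : ℝ × ℝ × ℝ => f p.1 p.2.1 (p.2.2, η))
    (heq : ∀ t ∈ Ioo 0 T, ∀ x > 0, ∀ ξ : ℝ × W,
      deriv (fun s => f s x ξ) t + ξ.1 * deriv (fun y => f t y ξ) x
        + E t x * deriv (fun v => f t x (v, ξ.2)) ξ.1 - κ ξ * E t x * f t x ξ = F t x ξ)
    (hbc : ∀ t ∈ Icc 0 T, ∀ ξ : ℝ × W, 0 < ξ.1 → f t 0 ξ = 0)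
    (hic : ∀ x ≥ 0, ∀ ξ : ℝ × W, R < ξ.1 → f 0 x ξ = 0) :
    ∀ t ∈ Icc 0 T, ∀ x ≥ 0, ∀ ξ : ℝ × W, R + c₀ * t < ξ.1 → f t x ξ = 0 := by
  rintro t₀ ht₀ x₀ hx₀ ⟨v₀, η⟩ hv₀
  have hc₀ : 0 ≤ c₀ := (abs_nonneg _).trans (hE 0 ⟨le_rfl, hT.le⟩ 0 le_rfl)
  refine eq_zero_of_transportInequalityAt (G := fun p => f p.1 p.2.1 (p.2.2, η))
    (A := fun p => c₀ * |κ (p.2.2, η)|) hT hc₀ (hf η)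
    (((hκ η).comp (by fun_prop)).abs.const_mul c₀) (fun t ht x hx v hv => ?_)
    (fun t ht v hv => hbc t ht (v, η) hv) (fun x hx v hv => hic x hx (v, η) hv)
    t₀ ht₀ x₀ hx₀ v₀ hv₀
  have ht' := Ioo_subset_Icc_self ht
  have hfd := (hf η).differentiable one_ne_zero (t, x, v)
  simp only [TransportInequalityAt, fderiv_apply_eq_add_deriv hfd, smul_eq_mul, one_mul,
    zero_mul, add_zero, zero_add]
  refine abs_le_of_add_mul_sub_eq_zero (hE t ht' x hx.le) ?_
  exact (heq t ht x hx (v, η)).trans (hF t ht' x hx.le (v, η) hv)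

/-- finite propagation in velocity for the linearized Vlasov equation on
the half-line: if the data vanish for `ξ₁ > R`, the solution vanishes for
`ξ₁ > R + ĉ₀ t`. -/
theorem velocity_support_propagation
    (Th R u θ : ℝ) (hTh : 0 < Th) (hθ : 0 < θ)
    (E : ℝ → ℝ → ℝ) (hEc : Continuous (fun p : ℝ × ℝ => E p.1 p.2))
    (c₀ : ℝ) (hc₀fin : ∀ t ∈ Set.Icc 0 Th, ∀ x ≥ (0:ℝ), |E t x| ≤ c₀)
    (F : ℝ → ℝ → ℝ × ℝ × ℝ → ℝ)
    (hFc : Continuous (fun p : ℝ × ℝ × (ℝ × ℝ × ℝ) => F p.1 p.2.1 p.2.2))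
    (hF0 : ∀ t ∈ Set.Icc 0 Th, ∀ x ≥ (0:ℝ), ∀ ξ : ℝ × ℝ × ℝ, R < ξ.1 → F t x ξ = 0)
    (f : ℝ → ℝ → ℝ × ℝ × ℝ → ℝ)
    (hf : ContDiff ℝ 1 (fun p : ℝ × ℝ × (ℝ × ℝ × ℝ) => f p.1 p.2.1 p.2.2))
    (heq : ∀ t ∈ Set.Ioo 0 Th, ∀ x > (0:ℝ), ∀ ξ : ℝ × ℝ × ℝ,
      deriv (fun s => f s x ξ) t + ξ.1 * deriv (fun y => f t y ξ) x
        + E t x * deriv (fun v => f t x (v, ξ.2)) ξ.1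
        - ((ξ.1 - u) / (2*θ)) * E t x * f t x ξ
        = F t x ξ)
    (hbc : ∀ t ∈ Set.Icc 0 Th, ∀ ξ : ℝ × ℝ × ℝ, 0 < ξ.1 → f t 0 ξ = 0)
    (hic : ∀ x ≥ (0:ℝ), ∀ ξ : ℝ × ℝ × ℝ, R < ξ.1 → f 0 x ξ = 0)
    (hsup : ∃ B : ℝ, ∀ t ∈ Set.Icc 0 Th,
      (∫⁻ x in Set.Ioi 0, ∫⁻ ξ : ℝ × ℝ × ℝ,
        ENNReal.ofReal ((1 + |ξ.1|) * ((f t x ξ)^2 +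
          ‖fderiv ℝ (fun p : ℝ × ℝ × (ℝ × ℝ × ℝ) => f p.1 p.2.1 p.2.2) (t, x, ξ)‖^2)))
        ≤ ENNReal.ofReal B) :
    ∀ t ∈ Set.Icc 0 Th, ∀ x ≥ (0:ℝ), ∀ ξ : ℝ × ℝ × ℝ,
      R + c₀ * t < ξ.1 → f t x ξ = 0 := by
  exact velocity_support_propagation_general hTh hc₀fin (κ := fun ξ => (ξ.1 - u) / (2 * θ))
    (fun η => by fun_prop) hF0 (fun η => hf.comp
      (by fun_prop : ContDiff ℝ 1 fun p : ℝ × ℝ × ℝ => (p.1, p.2.1, (p.2.2, η)))) heq hbc hic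
end
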